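/- arXiv:1812.05299 — 11 statements merged into one kernel-verified Lean document; each statement's English description precedes it below -/
import Mathlib

section
/- For all real numbers m > 0, ν > 0 and X > 0, one has (1 + X)^m ≤ (1 + ν) X^m + (1 + 1/((1 + ν)^{1/m} − 1))^m. -/
theorem stmt2 (m ν X : ℝ) (hm : 0 < m) (hν : 0 < ν) (hX : 0 < X) :
    (1 + X) ^ m ≤ (1 + ν) * X ^ m + (1 + 1 / ((1 + ν) ^ (1 / m) - 1)) ^ m := by
  have hc : 1 < (1 + ν) ^ (1 / m) := Real.one_lt_rpow (by linarith) (by positivity)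
  have hcm : ((1 + ν) ^ (1 / m)) ^ m = 1 + ν := by
    rw [← Real.rpow_mul (by linarith), one_div_mul_cancel hm.ne', Real.rpow_one]
  generalize (1 + ν) ^ (1 / m) = c at hc hcm ⊢
  have hd : 0 < c - 1 := by linarith
  have hinv : 0 < 1 / (c - 1) := by positivity
  rcases le_total X (1 / (c - 1)) with h | h
  · have h1 : (1 + X) ^ m ≤ (1 + 1 / (c - 1)) ^ m :=
      Real.rpow_le_rpow (by linarith) (by linarith) hm.le
    have h2 : 0 ≤ (1 + ν) * X ^ m := by positivity
    linarith
  · have h0 : 1 ≤ X * (c - 1) := (div_le_iff₀ hd).1 h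
    have h1 : (1 + X) ^ m ≤ (c * X) ^ m :=
      Real.rpow_le_rpow (by linarith) (by linarith) hm.le
    rw [Real.mul_rpow (by linarith) hX.le, hcm] at h1
    have h2 : 0 ≤ (1 + 1 / (c - 1)) ^ m := by positivity
    linarith
end

section
/- For every real number k > 1 and every ν > 0 there exists a constant C_{k,ν} > 0, depending only on k and ν, such that for all v, v′ ∈ ℝ³: |⟨v′⟩^k − ⟨v⟩^k| ≤ (1 + ν) |v − v′|^k + C_{k,ν} |v − v′| ⟨v⟩^{k−1}. -/
/-- The Japanese bracket `⟨v⟩ = (1 + |v|²)^{1/2}`. -/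
noncomputable def jap (v : EuclideanSpace ℝ (Fin 3)) : ℝ := Real.sqrt (1 + ‖v‖ ^ 2)

theorem aux_tangent (k x y : ℝ) (hk : 1 < k) (hx : 0 < x) (hy : 0 ≤ y) :
    x ^ k - y ^ k ≤ k * (x - y) * x ^ (k - 1) := by
  have h := one_add_mul_self_le_rpow_one_add (s := y / x - 1)
    (by have := div_nonneg hy hx.le; linarith) hk.le
  have e : 1 + (y / x - 1) = y / x := by ring
  rw [e, Real.div_rpow hy hx.le, le_div_iff₀ (Real.rpow_pos_of_pos hx k)] at h
  have e2 : x ^ k = x * x ^ (k - 1) := by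
    rw [mul_comm, Real.rpow_sub_one hx.ne']
    field_simp
  have e3 : (1 + k * (y / x - 1)) * x ^ k = x ^ k + k * (y - x) * x ^ (k - 1) := by
    rw [e2]
    field_simp
  rw [e3] at h
  linarith

theorem jap_lip (v w : EuclideanSpace ℝ (Fin 3)) : jap w ≤ jap v + ‖v - w‖ := by
  have h1 : ‖v‖ ≤ jap v := by
    unfold jap
    apply Real.le_sqrt_of_sq_le
    linarith
  have h2 : jap v ^ 2 = 1 + ‖v‖ ^ 2 := by
    unfold jap
    exact Real.sq_sqrt (by positivity)
  have h3 : ‖w‖ ≤ ‖v‖ + ‖v - w‖ := by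
    have := norm_sub_norm_le w v
    rw [norm_sub_rev] at this
    linarith
  have h0 := norm_nonneg v
  have hd := norm_nonneg (v - w)
  have hw := norm_nonneg w
  generalize jap v = a at *
  unfold jap
  rw [Real.sqrt_le_left (by linarith)]
  nlinarith [mul_le_mul_of_nonneg_right h1 hd, pow_le_pow_left₀ hw h3 2]

theorem jap_one_le (v : EuclideanSpace ℝ (Fin 3)) : 1 ≤ jap v := by
  unfold jap
  apply Real.le_sqrt_of_sq_le
  nlinarith [sq_nonneg ‖v‖]

theorem stmt3 (k ν : ℝ) (hk : 1 < k) (hν : 0 < ν) :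
    ∃ C : ℝ, 0 < C ∧ ∀ v v' : EuclideanSpace ℝ (Fin 3),
      |jap v' ^ k - jap v ^ k| ≤ (1 + ν) * ‖v - v'‖ ^ k + C * ‖v - v'‖ * jap v ^ (k - 1) := by
  have hk0 : 0 < k := by linarith
  obtain ⟨ε, hε, hεk⟩ : ∃ ε : ℝ, 0 < ε ∧ (1 + ε) ^ k = 1 + ν := by
    refine ⟨(1 + ν) ^ (1 / k) - 1, ?_, ?_⟩
    · have := Real.one_lt_rpow (x := 1 + ν) (z := 1 / k) (by linarith) (by positivity)
      linarith
    · rw [add_sub_cancel, ← Real.rpow_mul (by linarith), one_div_mul_cancel hk0.ne', Real.rpow_one]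
  have hB : 1 ≤ (1 + 1 / ε) ^ (k - 1) :=
    Real.one_le_rpow (by have : 0 < 1 / ε := by positivity
                         linarith) (by linarith)
  refine ⟨k * (1 + 1 / ε) ^ (k - 1), by positivity, fun v v' => ?_⟩
  have h1 := jap_lip v v'
  have h2 := jap_lip v' v
  rw [norm_sub_rev] at h2
  have ha := jap_one_le v
  have hb := jap_one_le v'
  have hd := norm_nonneg (v - v')
  generalize jap v = a at *
  generalize jap v' = b at *
  generalize ‖v - v'‖ = d at *
  have hap : 0 < a ^ (k - 1) := Real.rpow_pos_of_pos (by linarith) _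
  have hdk : 0 ≤ d ^ k := Real.rpow_nonneg hd _
  rw [abs_le]
  constructor
  · have h := aux_tangent k a b hk (by linarith) (by linarith)
    have h3 : k * (a - b) * a ^ (k - 1) ≤ k * d * a ^ (k - 1) := by
      gcongr
      linarith
    have h4 : k * d * a ^ (k - 1) ≤ k * (1 + 1 / ε) ^ (k - 1) * d * a ^ (k - 1) := by
      gcongr
      nlinarith
    have h5 : 0 ≤ (1 + ν) * d ^ k := by positivity
    linarith
  · have hm : b ^ k ≤ (a + d) ^ k := Real.rpow_le_rpow (by linarith) h1 hk0.le
    rcases le_total a (ε * d) with hc | hc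
    · have h3 : (a + d) ^ k ≤ ((1 + ε) * d) ^ k :=
        Real.rpow_le_rpow (by linarith) (by linarith) hk0.le
      rw [Real.mul_rpow (by linarith) hd, hεk] at h3
      have h4 : 0 ≤ k * (1 + 1 / ε) ^ (k - 1) * d * a ^ (k - 1) := by positivity
      have h5 : 0 ≤ a ^ k := Real.rpow_nonneg (by linarith) _
      linarith
    · have h := aux_tangent k (a + d) a hk (by linarith) (by linarith)
      have hda : d ≤ 1 / ε * a := by
        rw [one_div, inv_mul_eq_div, le_div_iff₀ hε]
        linarith
      have h3 : (a + d) ^ (k - 1) ≤ ((1 + 1 / ε) * a) ^ (k - 1) :=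
        Real.rpow_le_rpow (by linarith) (by linarith) (by linarith)
      rw [Real.mul_rpow (by positivity) (by linarith)] at h3
      rw [add_sub_cancel_left] at h
      have h4 := mul_le_mul_of_nonneg_left h3 (mul_nonneg hk0.le hd)
      have h5 : 0 ≤ (1 + ν) * d ^ k := by positivity
      nlinarith
end

section
/- For every α > 0 there exists a constant c_α > 0, depending only on α, such that for all t > 0 and all ξ, η ∈ ℝ³: ∫₀^t |ξ − sη|^α ds ≥ c_α (t |ξ|^α + t^{α+1} |η|^α). -/
open MeasureTheory

theorem aux_rpow (α : ℝ) (hα : 0 < α) (x a b : ℝ) (hx : 0 ≤ x) (ha : 0 ≤ a) (hb : 0 ≤ b)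
    (h : x ≤ 2 * (a + b)) : x ^ α ≤ 4 ^ α * (a ^ α + b ^ α) := by
  have h4 : (0 : ℝ) < 4 ^ α := by positivity
  have ha' : 0 ≤ a ^ α := by positivity
  have hb' : 0 ≤ b ^ α := by positivity
  rcases le_total a b with hab | hab
  · calc x ^ α ≤ (4 * b) ^ α := Real.rpow_le_rpow hx (by linarith) hα.le
      _ = 4 ^ α * b ^ α := Real.mul_rpow (by norm_num) hb
      _ ≤ _ := by gcongr; linarith
  · calc x ^ α ≤ (4 * a) ^ α := Real.rpow_le_rpow hx (by linarith) hα.le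
      _ = 4 ^ α * a ^ α := Real.mul_rpow (by norm_num) ha
      _ ≤ _ := by gcongr; linarith

theorem stmt5 (α : ℝ) (hα : 0 < α) :
    ∃ c : ℝ, 0 < c ∧ ∀ t : ℝ, 0 < t → ∀ ξ η : EuclideanSpace ℝ (Fin 3),
      c * (t * ‖ξ‖ ^ α + t ^ (α + 1) * ‖η‖ ^ α) ≤ ∫ s in (0 : ℝ)..t, ‖ξ - s • η‖ ^ α := by
  have h4 : (0 : ℝ) < 4 ^ α := by positivity
  refine ⟨1 / (4 * 4 ^ α), by positivity, ?_⟩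
  intro t ht ξ η
  have hcont : Continuous (fun s : ℝ => ‖ξ - s • η‖ ^ α) :=
    Continuous.rpow_const (by fun_prop) (fun _ => Or.inr hα.le)
  have hcont2 : Continuous (fun s : ℝ => ‖ξ - (s + t / 2) • η‖ ^ α) :=
    hcont.comp (continuous_id.add continuous_const)
  have hpt : ∀ s ∈ Set.Icc (0 : ℝ) (t / 2), ‖ξ‖ ^ α + (t * ‖η‖) ^ α ≤
      2 * 4 ^ α * (‖ξ - s • η‖ ^ α + ‖ξ - (s + t / 2) • η‖ ^ α) := by
    intro s hs
    obtain ⟨hs0, hs1⟩ := hs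
    have e1 : (t / 2) • η = (ξ - s • η) - (ξ - (s + t / 2) • η) := by module
    have e2 : (t / 2) • ξ = (s + t / 2) • (ξ - s • η) - s • (ξ - (s + t / 2) • η) := by module
    have n1 := norm_sub_le (ξ - s • η) (ξ - (s + t / 2) • η)
    have n2 := norm_sub_le ((s + t / 2) • (ξ - s • η)) (s • (ξ - (s + t / 2) • η))
    rw [← e1, norm_smul, Real.norm_of_nonneg (by positivity)] at n1
    rw [← e2, norm_smul, norm_smul, norm_smul, Real.norm_of_nonneg (by positivity),
      Real.norm_of_nonneg (by positivity), Real.norm_of_nonneg hs0] at n2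
    have A := norm_nonneg (ξ - s • η)
    have B := norm_nonneg (ξ - (s + t / 2) • η)
    generalize ‖ξ - s • η‖ = a at *
    generalize ‖ξ - (s + t / 2) • η‖ = b at *
    have k1 := aux_rpow α hα (t * ‖η‖) a b (by positivity) A B (by linarith)
    have k2 := aux_rpow α hα ‖ξ‖ a b (by positivity) A B (by
      have : t / 2 * ‖ξ‖ ≤ t / 2 * (2 * (a + b)) := by
        nlinarith [mul_le_mul_of_nonneg_right hs1 A, mul_le_mul_of_nonneg_right hs1 B,
          mul_nonneg ht.le B]
      exact le_of_mul_le_mul_left this (by positivity))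
    linarith
  have hint := intervalIntegral.integral_mono_on (μ := volume) (a := 0) (b := t / 2) (by positivity)
    (intervalIntegrable_const) (((hcont.add hcont2).const_mul (2 * 4 ^ α)).intervalIntegrable _ _) hpt
  have hsum : ∫ s in (0 : ℝ)..(t / 2), 2 * 4 ^ α * (‖ξ - s • η‖ ^ α + ‖ξ - (s + t / 2) • η‖ ^ α)
      = 2 * 4 ^ α * ∫ s in (0 : ℝ)..t, ‖ξ - s • η‖ ^ α := by
    rw [intervalIntegral.integral_const_mul, intervalIntegral.integral_add
      (hcont.intervalIntegrable _ _) (hcont2.intervalIntegrable _ _),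
      intervalIntegral.integral_comp_add_right (fun s : ℝ => ‖ξ - s • η‖ ^ α) (t / 2),
      zero_add, add_halves, intervalIntegral.integral_add_adjacent_intervals
      (hcont.intervalIntegrable _ _) (hcont.intervalIntegrable _ _)]
  have hint' := hint.trans_eq hsum
  rw [intervalIntegral.integral_const, smul_eq_mul, sub_zero,
    Real.mul_rpow ht.le (norm_nonneg _)] at hint'
  rw [Real.rpow_add_one ht.ne', one_div, inv_mul_le_iff₀ (by positivity)]
  linarith
end

section
/- For every α > 0 there exist constants c_α, C_α > 0, depending only on α, such that for all t > 0 and all ξ, η ∈ ℝ³: c_α t (1 + |ξ|² + t²|η|²)^{α/2} ≤ ∫₀^t ⟨ξ − sη⟩^α ds ≤ C_α t (1 + |ξ|² + t²|η|²)^{α/2}. -/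
open MeasureTheory

theorem stmt6 (α : ℝ) (hα : 0 < α) :
    ∃ c C : ℝ, 0 < c ∧ 0 < C ∧ ∀ t : ℝ, 0 < t → ∀ ξ η : EuclideanSpace ℝ (Fin 3),
      c * t * (1 + ‖ξ‖ ^ 2 + t ^ 2 * ‖η‖ ^ 2) ^ (α / 2)
          ≤ (∫ s in (0 : ℝ)..t, Real.sqrt (1 + ‖ξ - s • η‖ ^ 2) ^ α) ∧
        (∫ s in (0 : ℝ)..t, Real.sqrt (1 + ‖ξ - s • η‖ ^ 2) ^ α)
          ≤ C * t * (1 + ‖ξ‖ ^ 2 + t ^ 2 * ‖η‖ ^ 2) ^ (α / 2) := by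
  refine ⟨(1/25 : ℝ) ^ (α/2) / 2, (2:ℝ) ^ (α/2), by positivity, by positivity, ?_⟩
  intro t ht ξ η
  have hα2 : 0 ≤ α / 2 := by positivity
  have hf : ∀ s : ℝ, Real.sqrt (1 + ‖ξ - s • η‖ ^ 2) ^ α
      = (1 + ‖ξ - s • η‖ ^ 2) ^ (α/2) := by
    intro s
    rw [Real.sqrt_eq_rpow, ← Real.rpow_mul (by positivity)]
    congr 1
    ring
  simp only [hf]
  have hcont : Continuous (fun s : ℝ => (1 + ‖ξ - s • η‖ ^ 2) ^ (α/2)) := by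
    refine Continuous.rpow_const (by fun_prop) (fun s => Or.inr hα2)
  have hint : ∀ a b : ℝ, IntervalIntegrable
      (fun s : ℝ => (1 + ‖ξ - s • η‖ ^ 2) ^ (α/2)) volume a b :=
    fun a b => hcont.intervalIntegrable a b
  have hM : 0 ≤ 1 + ‖ξ‖ ^ 2 + t ^ 2 * ‖η‖ ^ 2 := by positivity
  have hη := norm_nonneg η
  have hξ := norm_nonneg ξ
  constructor
  · have key : ∀ s ∈ Set.Icc (0:ℝ) (t/2),
        (1/25 : ℝ) ^ (α/2) * (1 + ‖ξ‖ ^ 2 + t ^ 2 * ‖η‖ ^ 2) ^ (α / 2)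
          ≤ (1 + ‖ξ - s • η‖ ^ 2) ^ (α/2) + (1 + ‖ξ - (s + t/2) • η‖ ^ 2) ^ (α/2) := by
      intro s hs
      have h1 : t / 2 * ‖η‖ ≤ ‖ξ - s • η‖ + ‖ξ - (s + t/2) • η‖ := by
        have : (t/2) • η = (ξ - s • η) - (ξ - (s + t/2) • η) := by
          rw [add_smul]; abel
        calc t / 2 * ‖η‖ = ‖(t/2) • η‖ := by
              rw [norm_smul, Real.norm_of_nonneg (by positivity)]
          _ ≤ _ := by rw [this]; exact norm_sub_le _ _
      have h2 : ‖ξ‖ ≤ ‖ξ - s • η‖ + t / 2 * ‖η‖ := by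
        calc ‖ξ‖ = ‖(ξ - s • η) + s • η‖ := by simp
          _ ≤ ‖ξ - s • η‖ + ‖s • η‖ := norm_add_le _ _
          _ = ‖ξ - s • η‖ + s * ‖η‖ := by rw [norm_smul, Real.norm_of_nonneg hs.1]
          _ ≤ _ := by gcongr; exact hs.2
      have core : ∀ m : ℝ, ‖ξ - s • η‖ ≤ m → ‖ξ - (s + t/2) • η‖ ≤ m →
          (1/25 : ℝ) ^ (α/2) * (1 + ‖ξ‖ ^ 2 + t ^ 2 * ‖η‖ ^ 2) ^ (α / 2)
          ≤ (1 + m ^ 2) ^ (α/2) := by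
        intro m ha hb
        rw [← Real.mul_rpow (by norm_num) hM]
        refine Real.rpow_le_rpow (by positivity) ?_ hα2
        have e1 : ‖ξ‖ ^ 2 ≤ (3 * m) ^ 2 := pow_le_pow_left₀ hξ (by linarith) 2
        have e2 : (t * ‖η‖) ^ 2 ≤ (4 * m) ^ 2 :=
          pow_le_pow_left₀ (by positivity) (by linarith) 2
        nlinarith
      have p1 : 0 ≤ (1 + ‖ξ - s • η‖ ^ 2) ^ (α/2) := by positivity
      have p2 : 0 ≤ (1 + ‖ξ - (s + t/2) • η‖ ^ 2) ^ (α/2) := by positivity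
      rcases le_total ‖ξ - s • η‖ ‖ξ - (s + t/2) • η‖ with h | h
      · linarith [core _ h le_rfl]
      · linarith [core _ le_rfl h]
    have hshift : (∫ s in (0:ℝ)..(t/2), (1 + ‖ξ - (s + t/2) • η‖ ^ 2) ^ (α/2))
        = ∫ s in (t/2)..t, (1 + ‖ξ - s • η‖ ^ 2) ^ (α/2) := by
      rw [intervalIntegral.integral_comp_add_right
        (fun s : ℝ => (1 + ‖ξ - s • η‖ ^ 2) ^ (α/2))]
      simp
    have hcont2 : Continuous (fun s : ℝ => (1 + ‖ξ - (s + t/2) • η‖ ^ 2) ^ (α/2)) :=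
      hcont.comp (continuous_add_const (t/2))
    have h3 := intervalIntegral.integral_mono_on (by positivity : (0:ℝ) ≤ t/2)
      (intervalIntegrable_const (μ := volume))
      ((hcont.add hcont2).intervalIntegrable 0 (t/2)) key
    rw [intervalIntegral.integral_const] at h3
    have h4 := intervalIntegral.integral_add (hint 0 (t/2))
      (hcont2.intervalIntegrable (μ := volume) 0 (t/2))
    rw [← intervalIntegral.integral_add_adjacent_intervals (hint 0 (t/2)) (hint (t/2) t),
      ← hshift, ← h4]
    refine le_trans (le_of_eq ?_) h3
    simp only [smul_eq_mul]
    ring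
  · have key : ∀ s ∈ Set.Icc (0:ℝ) t, (1 + ‖ξ - s • η‖ ^ 2) ^ (α/2)
        ≤ (2:ℝ) ^ (α/2) * (1 + ‖ξ‖ ^ 2 + t ^ 2 * ‖η‖ ^ 2) ^ (α / 2) := by
      intro s hs
      rw [← Real.mul_rpow (by norm_num) hM]
      refine Real.rpow_le_rpow (by positivity) ?_ hα2
      have h1 : ‖ξ - s • η‖ ≤ ‖ξ‖ + t * ‖η‖ := by
        calc ‖ξ - s • η‖ ≤ ‖ξ‖ + ‖s • η‖ := norm_sub_le _ _
          _ = ‖ξ‖ + s * ‖η‖ := by rw [norm_smul, Real.norm_of_nonneg hs.1]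
          _ ≤ _ := by gcongr; exact hs.2
      have h2 := pow_le_pow_left₀ (norm_nonneg _) h1 2
      nlinarith [sq_nonneg (‖ξ‖ - t * ‖η‖)]
    have h3 := intervalIntegral.integral_mono_on ht.le (hint 0 t)
      (intervalIntegrable_const (μ := volume)) key
    rw [intervalIntegral.integral_const] at h3
    refine le_trans h3 (le_of_eq ?_)
    simp only [smul_eq_mul]
    ring
end

section
/- For every β ∈ (0,1) there exists a constant C_β > 0, depending only on β, such that for all t > 0 and all ξ, η ∈ ℝ³: ∫₀^t ⟨ξ − sη⟩^{−β} ds ≤ C_β · t / (1 + |ξ|² + t²|η|²)^{β/2}. -/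
open MeasureTheory

lemma aux_int (β : ℝ) (hβ : β ∈ Set.Ioo (0 : ℝ) 1) (a b : ℝ) :
    IntervalIntegrable (fun v : ℝ => |v| ^ (-β)) volume a b := by
  have pos : ∀ c : ℝ, 0 ≤ c → IntervalIntegrable (fun v : ℝ => |v| ^ (-β)) volume 0 c := by
    intro c hc
    have h := intervalIntegral.intervalIntegrable_rpow' (a := 0) (b := c) (r := -β)
      (by linarith [hβ.2])
    refine h.congr ?_
    intro v hv
    rw [Set.uIoc_of_le hc] at hv
    simp only [abs_of_pos hv.1]
  have all : ∀ c : ℝ, IntervalIntegrable (fun v : ℝ => |v| ^ (-β)) volume 0 c := by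
    intro c
    rcases le_total 0 c with hc | hc
    · exact pos c hc
    · have h := (IntervalIntegrable.iff_comp_neg).1 (pos (-c) (by linarith))
      simpa using h
  exact (all a).symm.trans (all b)

lemma aux_lower (x y : EuclideanSpace ℝ (Fin 3)) :
    ∃ a : ℝ, |a| ≤ 2 ∧ ∀ u : ℝ, 0 ≤ u → u ≤ 1 →
      (1 + ‖x‖ ^ 2 + ‖y‖ ^ 2) * ((u - a) ^ 2 / 9) ≤ 1 + ‖x - u • y‖ ^ 2 := by
  have key : ∀ u : ℝ, ‖x - u • y‖ ^ 2 = ‖x‖ ^ 2 - 2 * u * inner ℝ x y + u ^ 2 * ‖y‖ ^ 2 := by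
    intro u
    rw [norm_sub_sq_real, inner_smul_right, norm_smul, mul_pow, Real.norm_eq_abs, sq_abs]
    ring
  have cs := abs_le.1 (abs_real_inner_le_norm x y)
  have hx := norm_nonneg x
  have hy := norm_nonneg y
  rcases lt_or_ge (2 * ‖y‖) ‖x‖ with h | h
  · refine ⟨0, by norm_num, fun u h0 h1 => ?_⟩
    have h2 : ‖x‖ / 2 ≤ ‖x - u • y‖ := by
      have := norm_sub_norm_le x (u • y)
      rw [norm_smul, Real.norm_eq_abs, abs_of_nonneg h0] at this
      nlinarith
    have h3 : (‖x‖ / 2) ^ 2 ≤ ‖x - u • y‖ ^ 2 := by gcongr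
    have h4 : ‖y‖ ^ 2 ≤ (‖x‖ / 2) ^ 2 := by gcongr; linarith
    have h5 : (u - 0) ^ 2 / 9 ≤ 1 / 9 := by nlinarith
    have h6 : (1 + ‖x‖ ^ 2 + ‖y‖ ^ 2) * ((u - 0) ^ 2 / 9) ≤ (1 + ‖x‖ ^ 2 + ‖y‖ ^ 2) * (1 / 9) := by
      gcongr
    nlinarith
  · rcases hy.eq_or_lt with hy0 | hy0
    · refine ⟨0, by norm_num, fun u h0 h1 => ?_⟩
      have hx0 : ‖x‖ = 0 := by linarith
      rw [← hy0, hx0]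
      nlinarith [sq_nonneg ‖x - u • y‖]
    · have ha : |inner ℝ x y / ‖y‖ ^ 2| ≤ 2 := by
        rw [abs_div, abs_of_pos (by positivity : 0 < ‖y‖ ^ 2), div_le_iff₀ (by positivity)]
        have := abs_real_inner_le_norm x y
        nlinarith
      refine ⟨_, ha, fun u h0 h1 => ?_⟩
      obtain ⟨a, hae⟩ : ∃ a, a = inner ℝ x y / ‖y‖ ^ 2 := ⟨_, rfl⟩
      rw [← hae] at ha ⊢
      have hin : inner ℝ x y = a * ‖y‖ ^ 2 := by rw [hae]; field_simp
      have h2 : ‖y‖ ^ 2 * (u - a) ^ 2 ≤ ‖x - u • y‖ ^ 2 := by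
        have h7 : a ^ 2 * ‖y‖ ^ 2 ≤ ‖x‖ ^ 2 := by
          have := key a
          rw [hin] at this
          nlinarith [sq_nonneg ‖x - a • y‖]
        rw [key, hin]
        nlinarith
      have ha' := abs_le.1 ha
      have h3 : (u - a) ^ 2 ≤ 9 := by nlinarith
      have h4 : ‖x‖ ^ 2 ≤ (2 * ‖y‖) ^ 2 := by gcongr
      nlinarith [mul_nonneg (sub_nonneg.2 h4) (sq_nonneg (u - a)), mul_nonneg (sq_nonneg ‖y‖) (sq_nonneg (u - a))]

theorem stmt7 (β : ℝ) (hβ : β ∈ Set.Ioo (0 : ℝ) 1) :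
    ∃ C : ℝ, 0 < C ∧ ∀ t : ℝ, 0 < t → ∀ ξ η : EuclideanSpace ℝ (Fin 3),
      (∫ s in (0 : ℝ)..t, Real.sqrt (1 + ‖ξ - s • η‖ ^ 2) ^ (-β))
        ≤ C * t / (1 + ‖ξ‖ ^ 2 + t ^ 2 * ‖η‖ ^ 2) ^ (β / 2) := by
  have hK0 : 0 ≤ ∫ v in (-3 : ℝ)..3, |v| ^ (-β) :=
    intervalIntegral.integral_nonneg (by norm_num) (fun v _ => by positivity)
  obtain ⟨K, hK⟩ : ∃ K, K = ∫ v in (-3 : ℝ)..3, |v| ^ (-β) := ⟨_, rfl⟩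
  rw [← hK] at hK0
  refine ⟨9 ^ (β / 2) * (K + 1), by positivity, fun t ht ξ η => ?_⟩
  obtain ⟨a, ha, hlow⟩ := aux_lower ξ (t • η)
  have ha' := abs_le.1 ha
  have hM : 1 + ‖ξ‖ ^ 2 + ‖t • η‖ ^ 2 = 1 + ‖ξ‖ ^ 2 + t ^ 2 * ‖η‖ ^ 2 := by
    rw [norm_smul, mul_pow, Real.norm_eq_abs, sq_abs]
  rw [hM] at hlow
  obtain ⟨M, hMe⟩ : ∃ M, M = 1 + ‖ξ‖ ^ 2 + t ^ 2 * ‖η‖ ^ 2 := ⟨_, rfl⟩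
  rw [← hMe] at hlow ⊢
  have hMpos : 0 < M := by rw [hMe]; positivity
  have hsub : (∫ s in (0 : ℝ)..t, Real.sqrt (1 + ‖ξ - s • η‖ ^ 2) ^ (-β))
      = t * ∫ u in (0 : ℝ)..1, Real.sqrt (1 + ‖ξ - u • (t • η)‖ ^ 2) ^ (-β) := by
    have := intervalIntegral.smul_integral_comp_mul_left (a := 0) (b := 1)
      (fun s : ℝ => Real.sqrt (1 + ‖ξ - s • η‖ ^ 2) ^ (-β)) t
    simp only [mul_zero, mul_one, smul_eq_mul] at this
    rw [← this]
    simp only [smul_smul, mul_comm]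
  have hi : IntervalIntegrable (fun u : ℝ => |u - a| ^ (-β)) volume 0 1 := by
    have := (aux_int β hβ (0 - a) (1 - a)).comp_sub_right a
    simpa using this
  have hmono : (∫ u in (0 : ℝ)..1, Real.sqrt (1 + ‖ξ - u • (t • η)‖ ^ 2) ^ (-β))
      ≤ ∫ u in (0 : ℝ)..1, (M ^ (-(β / 2)) * 9 ^ (β / 2)) * |u - a| ^ (-β) := by
    apply intervalIntegral.integral_mono_ae_restrict (by norm_num)
    · apply Continuous.intervalIntegrable
      apply Continuous.rpow_const (by fun_prop)
      intro u; left
      positivity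
    · exact hi.const_mul _
    · have hne : ∀ᵐ u : ℝ ∂(volume.restrict (Set.Icc 0 1)), u ≠ a :=
        ae_restrict_of_ae (Measure.ae_ne volume a)
      filter_upwards [hne, ae_restrict_mem measurableSet_Icc] with u hu hmem
      have h := hlow u hmem.1 hmem.2
      have hpos : 0 < (u - a) ^ 2 := by
        have := sub_ne_zero.2 hu
        positivity
      have e1 : Real.sqrt (1 + ‖ξ - u • (t • η)‖ ^ 2) ^ (-β)
          = (1 + ‖ξ - u • (t • η)‖ ^ 2) ^ (-(β / 2)) := by
        rw [Real.sqrt_eq_rpow, ← Real.rpow_mul (by positivity)]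
        congr 1; ring
      have e2 : (M * ((u - a) ^ 2 / 9)) ^ (-(β / 2))
          = (M ^ (-(β / 2)) * 9 ^ (β / 2)) * |u - a| ^ (-β) := by
        rw [Real.mul_rpow hMpos.le (by positivity), Real.div_rpow hpos.le (by norm_num),
          ← sq_abs (u - a), ← Real.rpow_natCast, ← Real.rpow_mul (abs_nonneg _),
          Real.rpow_neg (by norm_num : (0:ℝ) ≤ 9), div_inv_eq_mul]
        have : ((2 : ℕ) : ℝ) * -(β / 2) = -β := by push_cast; ring
        rw [this]; ring
      show Real.sqrt (1 + ‖ξ - u • (t • η)‖ ^ 2) ^ (-β) ≤ _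
      rw [e1, ← e2]
      exact Real.rpow_le_rpow_of_nonpos (by positivity) h (by linarith [hβ.1])
  have hle : (∫ u in (0 : ℝ)..1, |u - a| ^ (-β)) ≤ K := by
    rw [intervalIntegral.integral_comp_sub_right (fun v : ℝ => |v| ^ (-β)) a, hK]
    apply intervalIntegral.integral_mono_interval (by linarith) (by linarith) (by linarith)
    · exact Filter.Eventually.of_forall (fun v => by simp only [Pi.zero_apply]; positivity)
    · exact aux_int β hβ _ _
  rw [intervalIntegral.integral_const_mul] at hmono
  rw [hsub]
  calc _ ≤ t * ((M ^ (-(β / 2)) * 9 ^ (β / 2)) * (K + 1)) := by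
        refine mul_le_mul_of_nonneg_left (hmono.trans ?_) ht.le
        refine mul_le_mul_of_nonneg_left (by linarith) (by positivity)
    _ = _ := by
        rw [Real.rpow_neg hMpos.le, div_eq_mul_inv]; ring
end

section
/- For every γ ∈ (0,1] and every v ∈ ℝ³: ∫_{ℝ³} |v − v★|^γ μ(v★) dv★ > 2^{−γ−7} · (28 / (3√(2π))) · ⟨v⟩^γ. -/
open MeasureTheory

/-- The normalized Maxwellian `μ(v) = (2π)^{−3/2} exp(−|v|²/2)` on ℝ³. -/
noncomputable def maxw (v : EuclideanSpace ℝ (Fin 3)) : ℝ :=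
  (2 * Real.pi) ^ (-(3 : ℝ) / 2) * Real.exp (-‖v‖ ^ 2 / 2)

lemma aux_gauss (b : ℝ) (hb : 0 < b) :
    Integrable (fun w : EuclideanSpace ℝ (Fin 3) => Real.exp (-b * ‖w‖ ^ 2)) := by
  by_contra h
  have h1 := GaussianFourier.integral_rexp_neg_mul_sq_norm (V := EuclideanSpace ℝ (Fin 3)) hb
  rw [integral_undef h] at h1
  have : 0 < (Real.pi / b) ^ (Module.finrank ℝ (EuclideanSpace ℝ (Fin 3)) / 2 : ℝ) := by positivity
  linarith

lemma aux_K : (2 * Real.pi) ^ (-(3 : ℝ) / 2) * (2 * Real.pi * Real.sqrt (2 * Real.pi)) = 1 := by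
  have hp : 0 < 2 * Real.pi := by positivity
  rw [Real.sqrt_eq_rpow]
  nth_rewrite 2 [← Real.rpow_one (2 * Real.pi)]
  rw [← Real.rpow_add hp, ← Real.rpow_add hp]
  norm_num

lemma aux_maxw_int : Integrable maxw := by
  have := (aux_gauss (1/2) (by norm_num)).const_mul ((2 * Real.pi) ^ (-(3 : ℝ) / 2))
  refine this.congr (Filter.Eventually.of_forall fun w => ?_)
  simp only [maxw]
  congr 2
  ring

lemma aux_maxw_one : ∫ w, maxw w = 1 := by
  have h := GaussianFourier.integral_rexp_neg_mul_sq_norm (V := EuclideanSpace ℝ (Fin 3))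
    (b := 1/2) (by norm_num)
  have e : maxw = fun w => (2 * Real.pi) ^ (-(3 : ℝ) / 2) * Real.exp (-(1/2) * ‖w‖ ^ 2) := by
    funext w
    simp only [maxw]
    congr 2
    ring
  rw [e, integral_const_mul, h]
  have hp : 0 < 2 * Real.pi := by positivity
  have : Real.pi / (1/2) = 2 * Real.pi := by ring
  rw [this, ← Real.rpow_add hp]
  norm_num

lemma aux_maxw_pos (w : EuclideanSpace ℝ (Fin 3)) : 0 < maxw w := by
  unfold maxw; positivity

lemma aux_maxw_le (w : EuclideanSpace ℝ (Fin 3)) : maxw w ≤ (2 * Real.pi) ^ (-(3 : ℝ) / 2) := by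
  unfold maxw
  have : Real.exp (-‖w‖ ^ 2 / 2) ≤ 1 := Real.exp_le_one_iff.2 (by nlinarith [sq_nonneg ‖w‖])
  have h : 0 < (2 * Real.pi) ^ (-(3 : ℝ) / 2) := by positivity
  nlinarith

lemma aux_int_s8 (γ : ℝ) (hγ : γ ∈ Set.Ioc (0 : ℝ) 1) (v : EuclideanSpace ℝ (Fin 3)) :
    Integrable (fun w => ‖v - w‖ ^ γ * maxw w) := by
  have hb := ((aux_maxw_int.const_mul (1 + ‖v‖)).add
    ((aux_gauss (1/4) (by norm_num)).const_mul ((2 * Real.pi) ^ (-(3 : ℝ) / 2))))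
  refine hb.mono' ?_ (Filter.Eventually.of_forall fun w => ?_)
  · refine AEStronglyMeasurable.mul ?_ aux_maxw_int.aestronglyMeasurable
    refine Continuous.aestronglyMeasurable ?_
    exact (by fun_prop : Continuous fun w => ‖v - w‖).rpow_const (fun _ => Or.inr hγ.1.le)
  · have hm := aux_maxw_pos w
    rw [Real.norm_of_nonneg (by positivity)]
    have h1 : ‖v - w‖ ^ γ ≤ 1 + ‖v‖ + ‖w‖ := by
      have : ‖v - w‖ ^ γ ≤ (1 + ‖v - w‖) ^ γ :=
        Real.rpow_le_rpow (norm_nonneg _) (by linarith) hγ.1.le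
      have h2 : (1 + ‖v - w‖) ^ γ ≤ (1 + ‖v - w‖) ^ (1:ℝ) :=
        Real.rpow_le_rpow_of_exponent_le (by linarith [norm_nonneg (v - w)]) hγ.2
      rw [Real.rpow_one] at h2
      linarith [norm_sub_le v w]
    have h3 : ‖w‖ * maxw w ≤ (2 * Real.pi) ^ (-(3 : ℝ) / 2) * Real.exp (-(1/4) * ‖w‖ ^ 2) := by
      have e : Real.exp (-‖w‖ ^ 2 / 2) = Real.exp (-(1/4) * ‖w‖ ^ 2) * Real.exp (-(1/4) * ‖w‖ ^ 2) := by
        rw [← Real.exp_add]; congr 1; ring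
      have h4 : ‖w‖ ≤ Real.exp (1/4 * ‖w‖ ^ 2) := by
        nlinarith [Real.add_one_le_exp (1/4 * ‖w‖ ^ 2), sq_nonneg (‖w‖ - 2)]
      have h5 : ‖w‖ * Real.exp (-(1/4) * ‖w‖ ^ 2) ≤ 1 := by
        calc _ ≤ Real.exp (1/4 * ‖w‖ ^ 2) * Real.exp (-(1/4) * ‖w‖ ^ 2) := by gcongr
          _ = 1 := by rw [← Real.exp_add]; simp
      unfold maxw
      rw [e]
      have hk : 0 < (2 * Real.pi) ^ (-(3 : ℝ) / 2) * Real.exp (-(1/4) * ‖w‖ ^ 2) := by positivity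
      nlinarith
    simp only [Pi.add_apply]
    nlinarith

lemma aux_pt (γ : ℝ) (hγ : γ ∈ Set.Ioc (0 : ℝ) 1) (v w : EuclideanSpace ℝ (Fin 3))
    (hw : 1 ≤ ‖w‖) : jap v ^ γ ≤ ‖v - w‖ ^ γ + ‖v + w‖ ^ γ := by
  have hpar := parallelogram_law_with_norm ℝ v w
  have hA := norm_nonneg (v - w)
  have hB := norm_nonneg (v + w)
  have hA' : 0 ≤ ‖v - w‖ ^ γ := by positivity
  have hB' : 0 ≤ ‖v + w‖ ^ γ := by positivity
  have hj : 0 ≤ jap v := Real.sqrt_nonneg _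
  rcases le_total ‖v - w‖ ‖v + w‖ with h | h
  · have : jap v ≤ ‖v + w‖ := Real.sqrt_le_iff.2 ⟨hB, by nlinarith⟩
    linarith [Real.rpow_le_rpow hj this hγ.1.le]
  · have : jap v ≤ ‖v - w‖ := Real.sqrt_le_iff.2 ⟨hA, by nlinarith⟩
    linarith [Real.rpow_le_rpow hj this hγ.1.le]

theorem stmt8 (γ : ℝ) (hγ : γ ∈ Set.Ioc (0 : ℝ) 1) (v : EuclideanSpace ℝ (Fin 3)) :
    (2 : ℝ) ^ (-γ - 7) * (28 / (3 * Real.sqrt (2 * Real.pi))) * jap v ^ γ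
      < ∫ vs, ‖v - vs‖ ^ γ * maxw vs := by
  have hI := aux_int_s8 γ hγ v
  have hsym : ∫ w, ‖v + w‖ ^ γ * maxw w = ∫ w, ‖v - w‖ ^ γ * maxw w := by
    rw [← integral_neg_eq_self]
    simp [maxw, sub_eq_add_neg]
  have hI2 : Integrable (fun w => ‖v + w‖ ^ γ * maxw w) := by
    have := hI.comp_neg
    simpa [maxw, sub_eq_add_neg] using this
  set K : ℝ := (2 * Real.pi) ^ (-(3 : ℝ) / 2) with hK
  have hK0 : 0 < K := by positivity
  have hjp : 0 < jap v := Real.sqrt_pos.2 (by positivity)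
  have hc : 0 < jap v ^ γ := by positivity
  set B := Metric.ball (0 : EuclideanSpace ℝ (Fin 3)) 1 with hB
  have hBI : Integrable (B.indicator fun _ => K) :=
    (integrable_indicator_iff measurableSet_ball).2
      (integrableOn_const (measure_ball_lt_top.ne))
  have hBv : ∫ w, B.indicator (fun _ => K) w = Real.pi * 4 / 3 * K := by
    rw [integral_indicator measurableSet_ball, setIntegral_const, smul_eq_mul, Measure.real,
      EuclideanSpace.volume_ball_fin_three]
    congr 1
    simp
    positivity
  have hmono : ∫ w, jap v ^ γ * (maxw w - B.indicator (fun _ => K) w) ≤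
      ∫ w, (‖v - w‖ ^ γ * maxw w + ‖v + w‖ ^ γ * maxw w) := by
    refine integral_mono ((aux_maxw_int.sub hBI).const_mul _) (hI.add hI2) fun w => ?_
    have hm := aux_maxw_pos w
    have hle := aux_maxw_le w
    by_cases hw : w ∈ B
    · simp only [Set.indicator_of_mem hw]
      have : 0 ≤ ‖v - w‖ ^ γ * maxw w + ‖v + w‖ ^ γ * maxw w := by positivity
      nlinarith
    · simp only [Set.indicator_of_notMem hw]
      have := aux_pt γ hγ v w (by simpa [hB] using hw)
      nlinarith
  rw [integral_const_mul, integral_sub aux_maxw_int hBI, integral_add hI hI2, hsym,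
    aux_maxw_one, hBv] at hmono
  have hs : 2 < Real.sqrt (2 * Real.pi) :=
    Real.lt_sqrt_of_sq_lt (by nlinarith [Real.pi_gt_three])
  have hk := aux_K
  rw [← hK] at hk
  set s := Real.sqrt (2 * Real.pi)
  have hpk : Real.pi * 4 / 3 * K ≤ 1 / 3 := by
    have : 0 < Real.pi * K := by positivity
    nlinarith
  have hlow : jap v ^ γ * (2/3) ≤ 2 * ∫ w, ‖v - w‖ ^ γ * maxw w := by nlinarith
  have h2 : (2 : ℝ) ^ (-γ - 7) ≤ 1 / 128 := by
    calc (2 : ℝ) ^ (-γ - 7) ≤ 2 ^ (-7 : ℝ) :=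
          Real.rpow_le_rpow_of_exponent_le (by norm_num) (by linarith [hγ.1])
      _ = 1 / 128 := by
        rw [Real.rpow_neg (by norm_num)]; norm_num
  have h3 : 28 / (3 * s) ≤ 14 / 3 := by
    rw [div_le_div_iff₀ (by positivity) (by norm_num)]; nlinarith
  have h4 : (2 : ℝ) ^ (-γ - 7) * (28 / (3 * s)) ≤ 1 / 128 * (14 / 3) := by
    gcongr
  nlinarith
end

section
/- Let v, v★ ∈ ℝ³, let σ ∈ 𝕊² be a unit vector, and set v′ = (v + v★)/2 + (|v − v★|/2)σ. Then μ(v) · μ(v′)^{−1/2} ≤ μ(v)^{1/4} · exp((3/4)|v − v★|²) and μ(v★) · μ(v′)^{−1/2} ≤ μ(v★)^{1/4} · exp((3/4)|v − v★|²). -/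
theorem maxw_aux (u w : EuclideanSpace ℝ (Fin 3)) (r : ℝ) (h : ‖w - u‖ ≤ r) :
    maxw u * maxw w ^ (-(1 / 2) : ℝ)
        ≤ maxw u ^ ((1 / 4) : ℝ) * Real.exp ((3 / 4) * r ^ 2) := by
  have hpi : (1 : ℝ) ≤ 2 * Real.pi := by linarith [Real.pi_gt_three]
  have hL : 0 ≤ Real.log (2 * Real.pi) := Real.log_nonneg hpi
  have key : ∀ x, maxw x = Real.exp (Real.log (2 * Real.pi) * (-(3 : ℝ) / 2) + -‖x‖ ^ 2 / 2) := by
    intro x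
    rw [maxw, Real.exp_add, Real.rpow_def_of_pos (by linarith)]
  have hw : ‖w‖ ≤ ‖u‖ + r := by
    have := norm_add_le u (w - u)
    rw [add_sub_cancel] at this
    linarith
  have h2 : ‖w‖ ^ 2 ≤ (‖u‖ + r) ^ 2 := by gcongr
  rw [key, key, ← Real.exp_mul, ← Real.exp_mul, ← Real.exp_add, ← Real.exp_add, Real.exp_le_exp]
  nlinarith [sq_nonneg (‖u‖ - 2 * r)]

theorem stmt11 (v vs σ v' : EuclideanSpace ℝ (Fin 3)) (hσ : ‖σ‖ = 1)
    (hv' : v' = (1 / 2 : ℝ) • (v + vs) + (‖v - vs‖ / 2) • σ) :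
    maxw v * maxw v' ^ (-(1 / 2) : ℝ)
        ≤ maxw v ^ ((1 / 4) : ℝ) * Real.exp ((3 / 4) * ‖v - vs‖ ^ 2) ∧
      maxw vs * maxw v' ^ (-(1 / 2) : ℝ)
        ≤ maxw vs ^ ((1 / 4) : ℝ) * Real.exp ((3 / 4) * ‖v - vs‖ ^ 2) := by
  have hn : ‖(‖v - vs‖ / 2) • σ‖ = ‖v - vs‖ / 2 := by
    rw [norm_smul, hσ, mul_one, Real.norm_of_nonneg (by positivity)]
  have hh : ‖(1 / 2 : ℝ) • (v - vs)‖ = ‖v - vs‖ / 2 := by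
    rw [norm_smul, Real.norm_of_nonneg (by norm_num)]
    ring
  constructor
  · apply maxw_aux
    have e : v' - v = (‖v - vs‖ / 2) • σ - (1 / 2 : ℝ) • (v - vs) := by
      rw [hv']; module
    rw [e]
    refine (norm_sub_le _ _).trans ?_
    rw [hn, hh]; linarith
  · apply maxw_aux
    have e : v' - vs = (‖v - vs‖ / 2) • σ + (1 / 2 : ℝ) • (v - vs) := by
      rw [hv']; module
    rw [e]
    refine (norm_add_le _ _).trans ?_
    rw [hn, hh]; linarith
end

section
/- Let γ ∈ (0,1], ν > 0 and let k be a real number with k ≥ 2 + (3+γ)/2 and 2(1+ν) < 2^{(2k−7−γ)/4}. Then for every θ ∈ (0, π/2]: 1 − cos^{2k−(3+γ)}(θ/2) − 2(1+ν) sin^{k−(3+γ)/2}(θ/2) ≥ sin²(θ/2) · (1 − 2(1+ν) · 2^{−(2k−7−γ)/4}) > 0. -/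
theorem stmt12 (γ ν k : ℝ) (hγ : γ ∈ Set.Ioc (0 : ℝ) 1) (hν : 0 < ν)
    (hk : 2 + (3 + γ) / 2 ≤ k) (hk2 : 2 * (1 + ν) < (2 : ℝ) ^ ((2 * k - 7 - γ) / 4))
    (θ : ℝ) (hθ : θ ∈ Set.Ioc (0 : ℝ) (Real.pi / 2)) :
    Real.sin (θ / 2) ^ 2 * (1 - 2 * (1 + ν) * (2 : ℝ) ^ (-((2 * k - 7 - γ) / 4)))
        ≤ 1 - Real.cos (θ / 2) ^ (2 * k - (3 + γ))
            - 2 * (1 + ν) * Real.sin (θ / 2) ^ (k - (3 + γ) / 2) ∧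
      0 < Real.sin (θ / 2) ^ 2 * (1 - 2 * (1 + ν) * (2 : ℝ) ^ (-((2 * k - 7 - γ) / 4))) := by
  obtain ⟨h0, h1⟩ := hθ
  obtain ⟨g0, g1⟩ := hγ
  have hpi := Real.pi_pos
  have hs : 0 < Real.sin (θ / 2) := Real.sin_pos_of_pos_of_lt_pi (by linarith) (by linarith)
  have hc : 0 < Real.cos (θ / 2) := Real.cos_pos_of_mem_Ioo ⟨by linarith, by linarith⟩
  have hc1 : Real.cos (θ / 2) ≤ 1 := Real.cos_le_one _
  have hcs := Real.sin_sq_add_cos_sq (θ / 2)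
  have hs2 : Real.sin (θ / 2) ^ 2 ≤ 1 / 2 := by
    have h := Real.cos_sq (θ / 2)
    have h' : 0 ≤ Real.cos (2 * (θ / 2)) :=
      Real.cos_nonneg_of_mem_Icc ⟨by linarith, by linarith⟩
    linarith
  have hcos : Real.cos (θ / 2) ^ (2 * k - (3 + γ)) ≤ Real.cos (θ / 2) ^ 2 := by
    rw [← Real.rpow_natCast]
    exact Real.rpow_le_rpow_of_exponent_ge hc hc1 (by push_cast; linarith)
  have hsin : Real.sin (θ / 2) ^ (k - (3 + γ) / 2)
      ≤ Real.sin (θ / 2) ^ 2 * (2 : ℝ) ^ (-((2 * k - 7 - γ) / 4)) := by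
    have e : Real.sin (θ / 2) ^ (k - (3 + γ) / 2)
        = Real.sin (θ / 2) ^ 2 * (Real.sin (θ / 2) ^ 2) ^ ((2 * k - 7 - γ) / 4) := by
      rw [← Real.rpow_natCast, ← Real.rpow_mul hs.le, ← Real.rpow_add hs]
      congr 1
      push_cast
      ring
    rw [e, Real.rpow_neg (by norm_num), ← Real.inv_rpow (by norm_num)]
    apply mul_le_mul_of_nonneg_left _ (by positivity)
    exact Real.rpow_le_rpow (by positivity) (by linarith) (by linarith)
  have hA : 2 * (1 + ν) * (2 : ℝ) ^ (-((2 * k - 7 - γ) / 4)) < 1 := by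
    rw [Real.rpow_neg (by norm_num), ← div_eq_mul_inv, div_lt_one (by positivity)]
    exact hk2
  constructor
  · have := mul_le_mul_of_nonneg_left hsin (show 0 ≤ 2 * (1 + ν) by linarith)
    linarith
  · exact mul_pos (by positivity) (by linarith)
end

section
/- Let 0 < s < 1 and ε > 0. There exists a constant C > 0, depending only on s and ε, such that for all δ > 0, T > 0, η ∈ ℝ³ and t ∈ [0, T], the map ξ ↦ M(t, ξ) is differentiable on ℝ³ and |∇_ξ M(t, ξ)| ≤ C (⟨ξ⟩ + (T − t)|η|)^{−1} M(t, ξ) for every ξ ∈ ℝ³. -/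
open MeasureTheory

/-- The symbol `M(t,ξ) = (1 + δ ∫₀^{T−t} ⟨ξ − τη⟩^{2s} dτ)^{−1/2−ε}`. -/
noncomputable def symbM (s ε δ T : ℝ) (η : EuclideanSpace ℝ (Fin 3)) (t : ℝ)
    (ξ : EuclideanSpace ℝ (Fin 3)) : ℝ :=
  (1 + δ * ∫ τ in (0 : ℝ)..(T - t), Real.sqrt (1 + ‖ξ - τ • η‖ ^ 2) ^ (2 * s)) ^
    (-(1 / 2 : ℝ) - ε)

abbrev E3 := EuclideanSpace ℝ (Fin 3)

lemma aux_cont (a : ℝ) (ξ η : E3) :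
    Continuous fun τ : ℝ => (1 + ‖ξ - τ • η‖ ^ 2) ^ a := by
  apply Continuous.rpow_const (by fun_prop)
  intro x; left; positivity

lemma aux_lip (x y : E3) : Real.sqrt (1 + ‖x‖ ^ 2) ≤ Real.sqrt (1 + ‖y‖ ^ 2) + ‖x - y‖ := by
  rw [Real.sqrt_le_left (by positivity)]
  have h1 : ‖x‖ ≤ ‖y‖ + ‖x - y‖ := by
    have := norm_add_le y (x - y); simpa using this
  have h2 : ‖y‖ ≤ Real.sqrt (1 + ‖y‖ ^ 2) := Real.le_sqrt_of_sq_le (by linarith)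
  have h3 := Real.sq_sqrt (show 0 ≤ 1 + ‖y‖ ^ 2 by positivity)
  have h4 := norm_nonneg (x - y)
  have h5 := norm_nonneg x
  have h6 : ‖x‖ ^ 2 ≤ (‖y‖ + ‖x - y‖) ^ 2 := by gcongr
  nlinarith [mul_le_mul_of_nonneg_right h2 h4]

/-- upper bound by the fundamental theorem of calculus -/
lemma aux_upper (s : ℝ) (hs0 : 0 < s) (hs1 : s < 1) (ξ η : E3) (L B : ℝ) (hL : 0 ≤ L)
    (h0 : (1 + ‖ξ - (0:ℝ) • η‖ ^ 2) ^ s ≤ B) (h1 : (1 + ‖ξ - L • η‖ ^ 2) ^ s ≤ B) :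
    s * ‖η‖ ^ 2 * ∫ τ in (0:ℝ)..L, (1 + ‖ξ - τ • η‖ ^ 2) ^ (s - 1/2) ≤ 2 * ‖η‖ * B := by
  set q : ℝ → ℝ := fun τ => 1 + ‖ξ - τ • η‖ ^ 2 with hq
  set g : ℝ → ℝ := fun τ => inner ℝ (ξ - τ • η) (-η) with hg
  have hqpos : ∀ τ, 0 < q τ := fun τ => by simp only [hq]; positivity
  have hlin : ∀ τ : ℝ, HasDerivAt (fun τ : ℝ => ξ - τ • η) (-η) τ := by
    intro τ
    simpa using ((hasDerivAt_id τ).smul_const η).const_sub ξ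
  have hqd : ∀ τ, HasDerivAt q (2 * g τ) τ := by
    intro τ
    exact (hlin τ).norm_sq.const_add 1
  have hgd : ∀ τ, HasDerivAt g (‖η‖ ^ 2) τ := by
    intro τ
    have := (hlin τ).inner ℝ (hasDerivAt_const τ (-η))
    simpa [hg, real_inner_self_eq_norm_sq] using this
  have hgb : ∀ τ, |g τ| ≤ ‖η‖ * q τ ^ (1/2 : ℝ) := by
    intro τ
    have h := abs_real_inner_le_norm (ξ - τ • η) (-η)
    rw [norm_neg] at h
    have h2 : ‖ξ - τ • η‖ ≤ q τ ^ (1/2 : ℝ) := by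
      rw [← Real.sqrt_eq_rpow]
      exact Real.le_sqrt_of_sq_le (by simp only [hq]; linarith)
    calc |g τ| ≤ ‖ξ - τ • η‖ * ‖η‖ := h
      _ ≤ q τ ^ (1/2 : ℝ) * ‖η‖ := by gcongr
      _ = _ := mul_comm _ _
  have hgsq : ∀ τ, g τ ^ 2 ≤ ‖η‖ ^ 2 * q τ := by
    intro τ
    have h := hgb τ
    rw [← Real.sqrt_eq_rpow] at h
    have h3 := Real.sq_sqrt (hqpos τ).le
    calc g τ ^ 2 = |g τ| ^ 2 := (sq_abs _).symm
      _ ≤ (‖η‖ * Real.sqrt (q τ)) ^ 2 := by gcongr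
      _ = _ := by rw [mul_pow, h3]
  set G' : ℝ → ℝ := fun τ => ‖η‖ ^ 2 * q τ ^ (s - 1/2)
      + g τ * (2 * g τ * (s - 1/2) * q τ ^ (s - 1/2 - 1)) with hG'
  have hGd : ∀ τ, HasDerivAt (fun τ => g τ * q τ ^ (s - 1/2)) (G' τ) τ := by
    intro τ
    exact (hgd τ).mul ((hqd τ).rpow_const (Or.inl (hqpos τ).ne'))
  have hgc : Continuous g := by simp only [hg]; fun_prop
  have hG'c : Continuous G' := by
    have a1 := aux_cont (s - 1/2) ξ η
    have a2 := aux_cont (s - 1/2 - 1) ξ η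
    simp only [hG', hq]
    fun_prop
  have hFTC := intervalIntegral.integral_eq_sub_of_hasDerivAt (a := 0) (b := L)
    (fun τ _ => hGd τ) (hG'c.intervalIntegrable _ _)
  have hle : ∀ τ, s * ‖η‖ ^ 2 * q τ ^ (s - 1/2) ≤ G' τ := by
    intro τ
    have e : q τ ^ (s - 1/2) = q τ * q τ ^ (s - 1/2 - 1) := by
      rw [mul_comm, ← Real.rpow_add_one (hqpos τ).ne']; ring_nf
    have hp : 0 < q τ ^ (s - 1/2 - 1) := Real.rpow_pos_of_pos (hqpos τ) _
    simp only [hG']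
    rw [e]
    have key : 0 ≤ (1 - s) * (‖η‖ ^ 2 * q τ) + (2 * s - 1) * g τ ^ 2 := by
      have k1 := hgsq τ
      have k2 := sq_nonneg (g τ)
      have k3 : 0 ≤ ‖η‖ ^ 2 * q τ := by have := hqpos τ; positivity
      rcases le_total (1/2) s with h | h
      · have : 0 ≤ (2 * s - 1) * g τ ^ 2 := mul_nonneg (by linarith) k2
        have := mul_nonneg (by linarith : 0 ≤ 1 - s) k3
        linarith
      · have := mul_le_mul_of_nonneg_left k1 (by linarith : 0 ≤ 1 - 2 * s)
        have := mul_nonneg hs0.le k3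
        nlinarith
    have := mul_nonneg key hp.le
    nlinarith
  have hint : ∫ τ in (0:ℝ)..L, s * ‖η‖ ^ 2 * q τ ^ (s - 1/2) ≤ ∫ τ in (0:ℝ)..L, G' τ := by
    apply intervalIntegral.integral_mono_on hL
    · exact ((aux_cont (s - 1/2) ξ η).const_mul _).intervalIntegrable _ _
    · exact hG'c.intervalIntegrable _ _
    · intro τ _; exact hle τ
  rw [intervalIntegral.integral_const_mul] at hint
  have hGb : ∀ τ, q τ ^ s ≤ B → |g τ * q τ ^ (s - 1/2)| ≤ ‖η‖ * B := by
    intro τ hB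
    have hp : 0 < q τ ^ (s - 1/2) := Real.rpow_pos_of_pos (hqpos τ) _
    rw [abs_mul, abs_of_pos hp]
    calc |g τ| * q τ ^ (s - 1/2) ≤ (‖η‖ * q τ ^ (1/2:ℝ)) * q τ ^ (s - 1/2) := by
          gcongr; exact hgb τ
      _ = ‖η‖ * q τ ^ s := by
          rw [mul_assoc, ← Real.rpow_add (hqpos τ)]; ring_nf
      _ ≤ _ := by gcongr
  have b0 := abs_le.1 (hGb 0 h0)
  have b1 := abs_le.1 (hGb L h1)
  linarith [b0.1, b1.2]

lemma aux_lower_s13 (s : ℝ) (hs0 : 0 < s) (ξ η : E3) (L : ℝ) (hL : 0 ≤ L) :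
    L / 2 * ((L * ‖η‖ / 4) ^ 2) ^ s ≤ ∫ τ in (0:ℝ)..L, (1 + ‖ξ - τ • η‖ ^ 2) ^ s := by
  have hc := aux_cont s ξ η
  have hc2 : Continuous fun τ : ℝ => (1 + ‖ξ - (τ + L/2) • η‖ ^ 2) ^ s :=
    hc.comp (continuous_id.add continuous_const)
  have hsplit := intervalIntegral.integral_add_adjacent_intervals
    (hc.intervalIntegrable (μ := volume) 0 (L/2)) (hc.intervalIntegrable (L/2) L)
  have hshift := intervalIntegral.integral_comp_add_right (a := 0) (b := L/2)
    (fun τ : ℝ => (1 + ‖ξ - τ • η‖ ^ 2) ^ s) (L/2)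
  rw [show (0:ℝ) + L/2 = L/2 by ring, show L/2 + L/2 = L by ring] at hshift
  rw [← hsplit, ← hshift, ← intervalIntegral.integral_add (hc.intervalIntegrable _ _)
    (hc2.intervalIntegrable _ _)]
  have hconst : L / 2 * ((L * ‖η‖ / 4) ^ 2) ^ s
      = ∫ τ in (0:ℝ)..(L/2), ((L * ‖η‖ / 4) ^ 2) ^ s := by
    simp
  rw [hconst]
  apply intervalIntegral.integral_mono_on (by linarith)
  · exact continuous_const.intervalIntegrable _ _
  · exact (hc.add hc2).intervalIntegrable _ _
  · intro τ _
    have p1 : 0 ≤ (1 + ‖ξ - τ • η‖ ^ 2) ^ s := by positivity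
    have p2 : 0 ≤ (1 + ‖ξ - (τ + L/2) • η‖ ^ 2) ^ s := by positivity
    have tri : L / 2 * ‖η‖ ≤ ‖ξ - τ • η‖ + ‖ξ - (τ + L/2) • η‖ := by
      have := norm_sub_le (ξ - τ • η) (ξ - (τ + L/2) • η)
      have e : (ξ - τ • η) - (ξ - (τ + L/2) • η) = (L/2) • η := by module
      rw [e, norm_smul, Real.norm_of_nonneg (by linarith)] at this
      exact this
    have hz : 0 ≤ L * ‖η‖ / 4 := by positivity
    rcases le_total (L * ‖η‖ / 4) ‖ξ - τ • η‖ with h | h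
    · have : ((L * ‖η‖ / 4) ^ 2) ^ s ≤ (1 + ‖ξ - τ • η‖ ^ 2) ^ s := by
        apply Real.rpow_le_rpow (by positivity) _ hs0.le
        have : (L * ‖η‖ / 4) ^ 2 ≤ ‖ξ - τ • η‖ ^ 2 := by gcongr
        linarith
      linarith
    · have : ((L * ‖η‖ / 4) ^ 2) ^ s ≤ (1 + ‖ξ - (τ + L/2) • η‖ ^ 2) ^ s := by
        apply Real.rpow_le_rpow (by positivity) _ hs0.le
        have h' : L * ‖η‖ / 4 ≤ ‖ξ - (τ + L/2) • η‖ := by linarith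
        have : (L * ‖η‖ / 4) ^ 2 ≤ ‖ξ - (τ + L/2) • η‖ ^ 2 := by gcongr
        linarith
      linarith

lemma aux_key (s : ℝ) (hs0 : 0 < s) (hs1 : s < 1) (ξ η : E3) (L : ℝ) (hL : 0 ≤ L) :
    s * (Real.sqrt (1 + ‖ξ‖ ^ 2) + L * ‖η‖) *
        ∫ τ in (0:ℝ)..L, (1 + ‖ξ - τ • η‖ ^ 2) ^ (s - 1/2)
      ≤ 1728 * ∫ τ in (0:ℝ)..L, (1 + ‖ξ - τ • η‖ ^ 2) ^ s := by
  set f0 := Real.sqrt (1 + ‖ξ‖ ^ 2) with hf0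
  set A := f0 + L * ‖η‖ with hA
  have hf0pos : 0 < f0 := Real.sqrt_pos.2 (by positivity)
  have hLη : 0 ≤ L * ‖η‖ := by positivity
  have hApos : 0 < A := by linarith
  have hnorm : ∀ τ ∈ Set.Icc (0:ℝ) L, ‖τ • η‖ ≤ L * ‖η‖ := by
    intro τ hτ
    rw [norm_smul, Real.norm_of_nonneg hτ.1]
    exact mul_le_mul_of_nonneg_right hτ.2 (norm_nonneg _)
  rcases le_total A (3 * (L * ‖η‖)) with hcase | hcase
  · have hup : ∀ τ ∈ Set.Icc (0:ℝ) L, (1 + ‖ξ - τ • η‖ ^ 2) ^ s ≤ (A ^ 2) ^ s := by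
      intro τ hτ
      apply Real.rpow_le_rpow (by positivity) _ hs0.le
      have h := aux_lip (ξ - τ • η) ξ
      rw [show ξ - τ • η - ξ = -(τ • η) by abel, norm_neg] at h
      have h' : Real.sqrt (1 + ‖ξ - τ • η‖ ^ 2) ≤ A := h.trans (by linarith [hnorm τ hτ])
      exact (Real.sqrt_le_left hApos.le).1 h'
    have hU := aux_upper s hs0 hs1 ξ η L ((A^2)^s) hL (hup 0 ⟨le_rfl, hL⟩) (hup L ⟨hL, le_rfl⟩)
    have hLo := aux_lower_s13 s hs0 ξ η L hL
    set I1 := ∫ τ in (0:ℝ)..L, (1 + ‖ξ - τ • η‖ ^ 2) ^ (s - 1/2)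
    set I0 := ∫ τ in (0:ℝ)..L, (1 + ‖ξ - τ • η‖ ^ 2) ^ s
    have hηpos : 0 < ‖η‖ := by
      rcases (norm_nonneg η).eq_or_lt with h | h
      · rw [← h] at hcase; linarith
      · exact h
    have hU' : s * ‖η‖ * I1 ≤ 2 * (A^2)^s := by
      apply le_of_mul_le_mul_left _ hηpos
      linarith
    have hB : 0 < (A^2)^s := by positivity
    have hLB : (A^2)^s ≤ 144 * ((L * ‖η‖ / 4) ^ 2) ^ s := by
      have h1 : (A^2)^s ≤ (144 * (L * ‖η‖ / 4) ^ 2) ^ s := by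
        apply Real.rpow_le_rpow (by positivity) _ hs0.le
        nlinarith
      rw [Real.mul_rpow (by norm_num) (by positivity)] at h1
      have h2 : (144:ℝ)^s ≤ 144 := by
        calc (144:ℝ)^s ≤ 144^(1:ℝ) := Real.rpow_le_rpow_of_exponent_le (by norm_num) hs1.le
          _ = 144 := Real.rpow_one _
      exact h1.trans (by gcongr)
    have hI1 : 0 ≤ I1 := by
      apply intervalIntegral.integral_nonneg hL
      intro τ _; positivity
    calc s * A * I1 ≤ s * (3 * (L * ‖η‖)) * I1 := by gcongr
      _ = 3 * L * (s * ‖η‖ * I1) := by ring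
      _ ≤ 3 * L * (2 * (A^2)^s) := by gcongr
      _ ≤ 3 * L * (2 * (144 * ((L * ‖η‖ / 4) ^ 2) ^ s)) := by gcongr
      _ = 1728 * (L / 2 * ((L * ‖η‖ / 4) ^ 2) ^ s) := by ring
      _ ≤ _ := by gcongr
  · rw [← intervalIntegral.integral_const_mul, ← intervalIntegral.integral_const_mul]
    apply intervalIntegral.integral_mono_on hL
    · exact ((aux_cont _ ξ η).const_mul _).intervalIntegrable _ _
    · exact ((aux_cont _ ξ η).const_mul _).intervalIntegrable _ _
    · intro τ hτ
      have hq : 0 < 1 + ‖ξ - τ • η‖ ^ 2 := by positivity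
      have h := aux_lip ξ (ξ - τ • η)
      rw [show ξ - (ξ - τ • η) = τ • η by abel] at h
      have hn := hnorm τ hτ
      have h3 : A ≤ 3 * Real.sqrt (1 + ‖ξ - τ • η‖ ^ 2) := by linarith
      rw [Real.sqrt_eq_rpow] at h3
      have hp : 0 < (1 + ‖ξ - τ • η‖ ^ 2) ^ (s - 1/2) := by positivity
      have e : (1 + ‖ξ - τ • η‖ ^ 2) ^ s
          = (1 + ‖ξ - τ • η‖ ^ 2) ^ (1/2:ℝ) * (1 + ‖ξ - τ • η‖ ^ 2) ^ (s - 1/2) := by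
        rw [← Real.rpow_add hq]; ring_nf
      rw [e, ← mul_assoc]
      apply mul_le_mul_of_nonneg_right _ hp.le
      have hh : 0 ≤ (1 + ‖ξ - τ • η‖ ^ 2) ^ (1/2:ℝ) := by positivity
      nlinarith

noncomputable def auxD (s : ℝ) (η ξ : E3) (τ : ℝ) : E3 →L[ℝ] ℝ :=
  (s * (1 + ‖ξ - τ • η‖ ^ 2) ^ (s - 1)) • ((2:ℝ) • innerSL ℝ (ξ - τ • η))

lemma auxD_norm (s : ℝ) (hs0 : 0 < s) (η ξ : E3) (τ : ℝ) :
    ‖auxD s η ξ τ‖ ≤ 2 * s * (1 + ‖ξ - τ • η‖ ^ 2) ^ (s - 1/2) := by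
  have hq : 0 < 1 + ‖ξ - τ • η‖ ^ 2 := by positivity
  have hp : 0 < (1 + ‖ξ - τ • η‖ ^ 2) ^ (s - 1) := by positivity
  rw [auxD, norm_smul, norm_smul, innerSL_apply_norm, Real.norm_of_nonneg (by positivity),
    Real.norm_of_nonneg (by norm_num)]
  have h2 : ‖ξ - τ • η‖ ≤ (1 + ‖ξ - τ • η‖ ^ 2) ^ (1/2 : ℝ) := by
    rw [← Real.sqrt_eq_rpow]
    exact Real.le_sqrt_of_sq_le (by linarith)
  have e : (1 + ‖ξ - τ • η‖ ^ 2) ^ (s - 1/2)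
      = (1 + ‖ξ - τ • η‖ ^ 2) ^ (s - 1) * (1 + ‖ξ - τ • η‖ ^ 2) ^ (1/2:ℝ) := by
    rw [← Real.rpow_add hq]; ring_nf
  rw [e]
  calc _ = 2 * s * ((1 + ‖ξ - τ • η‖ ^ 2) ^ (s - 1) * ‖ξ - τ • η‖) := by ring
    _ ≤ _ := by gcongr

lemma auxD_deriv (s : ℝ) (η ξ : E3) (τ : ℝ) :
    HasFDerivAt (fun ξ : E3 => (1 + ‖ξ - τ • η‖ ^ 2) ^ s) (auxD s η ξ τ) ξ := by
  have h1 : HasFDerivAt (fun ξ : E3 => ξ - τ • η) (ContinuousLinearMap.id ℝ E3) ξ :=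
    (hasFDerivAt_id ξ).sub_const _
  have h2 := (h1.norm_sq.const_add 1).rpow_const (p := s)
    (Or.inl (by positivity : (1 + ‖ξ - τ • η‖ ^ 2) ≠ 0))
  have e : auxD s η ξ τ = (s * (1 + ‖ξ - τ • η‖ ^ 2) ^ (s - 1)) •
      (2 • (innerSL ℝ (ξ - τ • η)).comp (ContinuousLinearMap.id ℝ E3)) := by
    unfold auxD
    rw [ContinuousLinearMap.comp_id, ofNat_smul_eq_nsmul]
  rw [e]
  exact h2

lemma auxI_deriv (s : ℝ) (hs0 : 0 < s) (hs1 : s < 1) (η ξ : E3) (L : ℝ) (hL : 0 ≤ L) :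
    HasFDerivAt (fun ξ : E3 => ∫ τ in (0:ℝ)..L, (1 + ‖ξ - τ • η‖ ^ 2) ^ s)
      (∫ τ in (0:ℝ)..L, auxD s η ξ τ) ξ := by
  refine intervalIntegral.hasFDerivAt_integral_of_dominated_of_fderiv_le
    (s := Metric.ball ξ 1) (bound := fun _ => 2 * s * (1 + (‖ξ‖ + 1 + L * ‖η‖) ^ 2))
    (Metric.ball_mem_nhds ξ one_pos) ?_ ?_ ?_ ?_ ?_ ?_
  · exact Filter.Eventually.of_forall fun x => (aux_cont s x η).aestronglyMeasurable
  · exact (aux_cont s ξ η).intervalIntegrable _ _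
  · apply Continuous.aestronglyMeasurable
    have := aux_cont (s - 1) ξ η
    unfold auxD
    fun_prop
  · refine Filter.Eventually.of_forall fun τ hτ x hx => ?_
    rw [Set.uIoc_of_le hL] at hτ
    refine (auxD_norm s hs0 η x τ).trans ?_
    have hx' : ‖x‖ ≤ ‖ξ‖ + 1 := by
      have h1 := norm_add_le ξ (x - ξ)
      rw [add_sub_cancel] at h1
      have h2 : ‖x - ξ‖ < 1 := by simpa [dist_eq_norm] using hx
      linarith
    have h3 : ‖x - τ • η‖ ≤ ‖ξ‖ + 1 + L * ‖η‖ := by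
      have h1 := norm_sub_le x (τ • η)
      rw [norm_smul, Real.norm_of_nonneg hτ.1.le] at h1
      have := mul_le_mul_of_nonneg_right hτ.2 (norm_nonneg η)
      linarith
    have h4 : (1 + ‖x - τ • η‖ ^ 2) ^ (s - 1/2) ≤ 1 + ‖x - τ • η‖ ^ 2 := by
      calc (1 + ‖x - τ • η‖ ^ 2) ^ (s - 1/2) ≤ (1 + ‖x - τ • η‖ ^ 2) ^ (1:ℝ) :=
            Real.rpow_le_rpow_of_exponent_le (by nlinarith [norm_nonneg (x - τ • η)]) (by linarith)
        _ = _ := Real.rpow_one _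
    gcongr
    exact h4.trans (by gcongr)
  · exact continuous_const.intervalIntegrable _ _
  · exact Filter.Eventually.of_forall fun τ _ x _ => auxD_deriv s η x τ

theorem stmt13 (s ε : ℝ) (hs : s ∈ Set.Ioo (0 : ℝ) 1) (hε : 0 < ε) :
    ∃ C : ℝ, 0 < C ∧ ∀ δ T : ℝ, 0 < δ → 0 < T → ∀ η : EuclideanSpace ℝ (Fin 3),
      ∀ t ∈ Set.Icc (0 : ℝ) T,
        Differentiable ℝ (symbM s ε δ T η t) ∧
          ∀ ξ : EuclideanSpace ℝ (Fin 3),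
            ‖fderiv ℝ (symbM s ε δ T η t) ξ‖
              ≤ C * (Real.sqrt (1 + ‖ξ‖ ^ 2) + (T - t) * ‖η‖)⁻¹ * symbM s ε δ T η t ξ := by
  obtain ⟨hs0, hs1⟩ := hs
  refine ⟨3456 * (1/2 + ε), by positivity, ?_⟩
  intro δ T hδ hT η t ht
  have hL : 0 ≤ T - t := by linarith [ht.2]
  set L := T - t with hLdef
  have hM : symbM s ε δ T η t = fun ξ => (1 + δ * ∫ τ in (0 : ℝ)..L,
      (1 + ‖ξ - τ • η‖ ^ 2) ^ s) ^ (-(1 / 2 : ℝ) - ε) := by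
    funext ξ
    unfold symbM
    congr 3
    apply intervalIntegral.integral_congr
    intro τ _
    simp only
    rw [Real.sqrt_eq_rpow, ← Real.rpow_mul (by positivity)]
    congr 1
    ring
  have hI0 : ∀ ξ : EuclideanSpace ℝ (Fin 3),
      0 ≤ ∫ τ in (0 : ℝ)..L, (1 + ‖ξ - τ • η‖ ^ 2) ^ s := by
    intro ξ
    apply intervalIntegral.integral_nonneg hL
    intro τ _; positivity
  have hpos : ∀ ξ : EuclideanSpace ℝ (Fin 3),
      0 < 1 + δ * ∫ τ in (0 : ℝ)..L, (1 + ‖ξ - τ • η‖ ^ 2) ^ s := by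
    intro ξ
    have := mul_nonneg hδ.le (hI0 ξ)
    linarith
  have hd := fun ξ : EuclideanSpace ℝ (Fin 3) =>
    (((auxI_deriv s hs0 hs1 η ξ L hL).const_mul δ).const_add 1).rpow_const
      (p := -(1 / 2 : ℝ) - ε) (Or.inl (hpos ξ).ne')
  rw [hM]
  refine ⟨fun ξ => (hd ξ).differentiableAt, fun ξ => ?_⟩
  rw [(hd ξ).fderiv]
  beta_reduce
  have hP := hpos ξ
  have hkey := aux_key s hs0 hs1 ξ η L hL
  have hD : ‖∫ τ in (0:ℝ)..L, auxD s η ξ τ‖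
      ≤ 2 * s * ∫ τ in (0:ℝ)..L, (1 + ‖ξ - τ • η‖ ^ 2) ^ (s - 1/2) := by
    rw [← intervalIntegral.integral_const_mul]
    apply intervalIntegral.norm_integral_le_of_norm_le hL
    · exact Filter.Eventually.of_forall fun τ _ => auxD_norm s hs0 η ξ τ
    · exact ((aux_cont _ ξ η).const_mul _).intervalIntegrable _ _
  set I0 := ∫ τ in (0 : ℝ)..L, (1 + ‖ξ - τ • η‖ ^ 2) ^ s
  set I1 := ∫ τ in (0 : ℝ)..L, (1 + ‖ξ - τ • η‖ ^ 2) ^ (s - 1/2)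
  have hA : 0 < Real.sqrt (1 + ‖ξ‖ ^ 2) + L * ‖η‖ := by
    have : 0 < Real.sqrt (1 + ‖ξ‖ ^ 2) := Real.sqrt_pos.2 (by positivity)
    positivity
  set A := Real.sqrt (1 + ‖ξ‖ ^ 2) + L * ‖η‖
  rw [norm_smul, norm_smul, Real.norm_of_nonneg hδ.le, norm_mul, Real.norm_eq_abs,
    abs_of_neg (by linarith : -(1 / 2 : ℝ) - ε < 0), Real.norm_of_nonneg (by positivity)]
  have hDA : δ * ‖∫ τ in (0:ℝ)..L, auxD s η ξ τ‖ ≤ 3456 * A⁻¹ * (1 + δ * I0) := by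
    have h1 : 2 * s * I1 ≤ 3456 * A⁻¹ * I0 := by
      rw [mul_assoc 3456, ← div_eq_inv_mul, ← mul_div_assoc, le_div_iff₀ hA]
      linarith
    calc δ * ‖∫ τ in (0:ℝ)..L, auxD s η ξ τ‖ ≤ δ * (3456 * A⁻¹ * I0) := by
          gcongr; exact hD.trans h1
      _ = 3456 * A⁻¹ * (δ * I0) := by ring
      _ ≤ _ := by gcongr; linarith
  have e : (1 + δ * I0) ^ (-(1 / 2 : ℝ) - ε)
      = (1 + δ * I0) ^ (-(1 / 2 : ℝ) - ε - 1) * (1 + δ * I0) := by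
    rw [← Real.rpow_add_one hP.ne']; ring_nf
  rw [e]
  have hp : 0 < (1 + δ * I0) ^ (-(1 / 2 : ℝ) - ε - 1) := Real.rpow_pos_of_pos hP _
  calc _ ≤ -(-(1 / 2 : ℝ) - ε) * (1 + δ * I0) ^ (-(1 / 2 : ℝ) - ε - 1) *
        (3456 * A⁻¹ * (1 + δ * I0)) := by
        apply mul_le_mul_of_nonneg_left hDA
        apply mul_nonneg (by linarith) hp.le
    _ = _ := by ring
end

section
/- Let 0 < s < 1 and 0 < ε < (1−s)/(2s). There exists a constant C > 0, depending only on s and ε, such that for all δ > 0, T > 0, η ∈ ℝ³, t ∈ [0, T], and all ξ, ξ★ ∈ ℝ³ with ⟨ξ★⟩ ≥ √2 |ξ|: ⟨ξ⟩ M(t, ξ) ≤ C ⟨ξ★⟩ M(t, ξ − ξ★). -/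
open MeasureTheory

lemma jb_norm_le (x : EuclideanSpace ℝ (Fin 3)) : ‖x‖ ≤ Real.sqrt (1 + ‖x‖ ^ 2) :=
  Real.le_sqrt_of_sq_le (by linarith)

lemma jb_one_le (x : EuclideanSpace ℝ (Fin 3)) : 1 ≤ Real.sqrt (1 + ‖x‖ ^ 2) :=
  Real.le_sqrt_of_sq_le (by nlinarith [sq_nonneg ‖x‖])

lemma jb_tri (x y : EuclideanSpace ℝ (Fin 3)) :
    Real.sqrt (1 + ‖x‖ ^ 2) ≤ Real.sqrt (1 + ‖y‖ ^ 2) + ‖x - y‖ := by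
  have h1 : ‖x‖ ≤ ‖y‖ + ‖x - y‖ := by
    have := norm_add_le y (x - y)
    simpa using this
  have h2 := jb_norm_le y
  have h3 : Real.sqrt (1 + ‖y‖ ^ 2) ^ 2 = 1 + ‖y‖ ^ 2 := Real.sq_sqrt (by positivity)
  apply Real.sqrt_le_iff.mpr
  constructor
  · positivity
  · nlinarith [norm_nonneg x, norm_nonneg y, norm_nonneg (x - y)]

lemma jb_cont (s : ℝ) (hs : 0 < s) (x η : EuclideanSpace ℝ (Fin 3)) :
    Continuous (fun τ : ℝ => Real.sqrt (1 + ‖x - τ • η‖ ^ 2) ^ (2 * s)) := by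
  apply Continuous.rpow_const
  · fun_prop
  · intro τ
    right; linarith

lemma I_upper (s : ℝ) (hs : 0 < s) (L : ℝ) (hL : 0 ≤ L) (x η : EuclideanSpace ℝ (Fin 3)) :
    (∫ τ in (0 : ℝ)..L, Real.sqrt (1 + ‖x - τ • η‖ ^ 2) ^ (2 * s))
      ≤ L * (Real.sqrt (1 + ‖x‖ ^ 2) + L * ‖η‖) ^ (2 * s) := by
  have h := intervalIntegral.integral_mono_on (μ := volume) hL
    ((jb_cont s hs x η).intervalIntegrable 0 L)
    (intervalIntegrable_const (c := (Real.sqrt (1 + ‖x‖ ^ 2) + L * ‖η‖) ^ (2 * s))) (by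
      intro τ hτ
      apply Real.rpow_le_rpow (by positivity) _ (by linarith)
      have h1 := jb_tri (x - τ • η) x
      have h2 : ‖x - τ • η - x‖ = τ * ‖η‖ := by
        rw [sub_sub_cancel_left, norm_neg, norm_smul, Real.norm_of_nonneg hτ.1]
      have h3 := mul_le_mul_of_nonneg_right hτ.2 (norm_nonneg η)
      linarith)
  simpa using h

lemma I_lower (s : ℝ) (hs : 0 < s) (L : ℝ) (hL : 0 ≤ L) (x η : EuclideanSpace ℝ (Fin 3)) :
    (L / 2) * ((Real.sqrt (1 + ‖x‖ ^ 2) + L * ‖η‖) / 7) ^ (2 * s) ≤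
    ∫ τ in (0 : ℝ)..L, Real.sqrt (1 + ‖x - τ • η‖ ^ 2) ^ (2 * s) := by
  have hc := jb_cont s hs x η
  have hc2 : Continuous (fun τ : ℝ => Real.sqrt (1 + ‖x - (τ + L / 2) • η‖ ^ 2) ^ (2 * s)) :=
    hc.comp (continuous_add_const (L / 2))
  have hsplit : (∫ τ in (0 : ℝ)..L, Real.sqrt (1 + ‖x - τ • η‖ ^ 2) ^ (2 * s)) =
      ∫ τ in (0 : ℝ)..(L / 2), (Real.sqrt (1 + ‖x - τ • η‖ ^ 2) ^ (2 * s) +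
        Real.sqrt (1 + ‖x - (τ + L / 2) • η‖ ^ 2) ^ (2 * s)) := by
    rw [intervalIntegral.integral_add (hc.intervalIntegrable _ _)
      (hc2.intervalIntegrable _ _),
      intervalIntegral.integral_comp_add_right
        (fun τ : ℝ => Real.sqrt (1 + ‖x - τ • η‖ ^ 2) ^ (2 * s)) (L / 2),
      zero_add, add_halves, intervalIntegral.integral_add_adjacent_intervals
        (hc.intervalIntegrable _ _) (hc.intervalIntegrable _ _)]
  rw [hsplit]
  have h := intervalIntegral.integral_mono_on (μ := volume) (a := 0) (b := L / 2) (by linarith)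
    (intervalIntegrable_const (c := ((Real.sqrt (1 + ‖x‖ ^ 2) + L * ‖η‖) / 7) ^ (2 * s)))
    ((hc.add hc2).intervalIntegrable 0 (L / 2)) (by
      intro τ hτ
      have hη := norm_nonneg η
      have a1 := jb_norm_le (x - τ • η)
      have a2 := jb_norm_le (x - (τ + L / 2) • η)
      have a3 : L / 2 * ‖η‖ ≤ ‖x - τ • η‖ + ‖x - (τ + L / 2) • η‖ := by
        have := norm_sub_le (x - τ • η) (x - (τ + L / 2) • η)
        have e : x - τ • η - (x - (τ + L / 2) • η) = (L / 2) • η := by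
          rw [add_smul]; abel
        rw [e, norm_smul, Real.norm_of_nonneg (by linarith)] at this
        exact this
      have a4 := jb_tri x (x - τ • η)
      rw [sub_sub_cancel, norm_smul, Real.norm_of_nonneg hτ.1] at a4
      have a5 := mul_le_mul_of_nonneg_right hτ.2 hη
      have hb : 0 ≤ (Real.sqrt (1 + ‖x‖ ^ 2) + L * ‖η‖) / 7 := by positivity
      try simp only [Pi.add_apply]
      rcases le_total (Real.sqrt (1 + ‖x - τ • η‖ ^ 2))
        (Real.sqrt (1 + ‖x - (τ + L / 2) • η‖ ^ 2)) with hm | hm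
      · have := Real.rpow_le_rpow hb (show _ ≤ Real.sqrt (1 + ‖x - (τ + L / 2) • η‖ ^ 2) by
          linarith) (show 0 ≤ 2 * s by linarith)
        have h0 : 0 ≤ Real.sqrt (1 + ‖x - τ • η‖ ^ 2) ^ (2 * s) := by positivity
        linarith
      · have := Real.rpow_le_rpow hb (show _ ≤ Real.sqrt (1 + ‖x - τ • η‖ ^ 2) by
          linarith) (show 0 ≤ 2 * s by linarith)
        have h0 : 0 ≤ Real.sqrt (1 + ‖x - (τ + L / 2) • η‖ ^ 2) ^ (2 * s) := by positivity
        linarith)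
  simpa using h

theorem stmt18 (s ε : ℝ) (hs : s ∈ Set.Ioo (0 : ℝ) 1)
    (hε : ε ∈ Set.Ioo (0 : ℝ) ((1 - s) / (2 * s))) :
    ∃ C : ℝ, 0 < C ∧ ∀ δ T : ℝ, 0 < δ → 0 < T → ∀ η : EuclideanSpace ℝ (Fin 3),
      ∀ t ∈ Set.Icc (0 : ℝ) T, ∀ ξ ξs : EuclideanSpace ℝ (Fin 3),
        Real.sqrt 2 * ‖ξ‖ ≤ Real.sqrt (1 + ‖ξs‖ ^ 2) →
        Real.sqrt (1 + ‖ξ‖ ^ 2) * symbM s ε δ T η t ξ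
          ≤ C * Real.sqrt (1 + ‖ξs‖ ^ 2) * symbM s ε δ T η t (ξ - ξs) := by
  obtain ⟨hs0, hs1⟩ := hs
  obtain ⟨hε0, hε1⟩ := hε
  rw [lt_div_iff₀ (by linarith)] at hε1
  refine ⟨21 * 2 ^ (1 / 2 + ε), by positivity, ?_⟩
  intro δ T hδ hT η t ht ξ ξs h
  unfold symbM
  have hL : 0 ≤ T - t := by linarith [ht.2]
  have hup := I_upper s hs0 (T - t) hL (ξ - ξs) η
  have hlo := I_lower s hs0 (T - t) hL ξ η
  have hI : 0 ≤ ∫ τ in (0 : ℝ)..(T - t), Real.sqrt (1 + ‖ξ - τ • η‖ ^ 2) ^ (2 * s) :=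
    intervalIntegral.integral_nonneg hL (fun τ _ => by positivity)
  have hI' : 0 ≤ ∫ τ in (0 : ℝ)..(T - t), Real.sqrt (1 + ‖ξ - ξs - τ • η‖ ^ 2) ^ (2 * s) :=
    intervalIntegral.integral_nonneg hL (fun τ _ => by positivity)
  have htri := jb_tri (ξ - ξs) ξ
  rw [sub_sub_cancel_left, norm_neg] at htri
  have hns := jb_norm_le ξs
  have h1 := jb_one_le ξ
  have h1s := jb_one_le ξs
  have hsq : Real.sqrt (1 + ‖ξ‖ ^ 2) ≤ 2 * Real.sqrt (1 + ‖ξs‖ ^ 2) := by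
    apply Real.sqrt_le_iff.mpr
    refine ⟨by positivity, ?_⟩
    have := pow_le_pow_left₀ (by positivity) h 2
    rw [mul_pow, Real.sq_sqrt (by norm_num)] at this
    nlinarith
  generalize (∫ τ in (0 : ℝ)..(T - t), Real.sqrt (1 + ‖ξ - τ • η‖ ^ 2) ^ (2 * s)) = I at *
  generalize (∫ τ in (0 : ℝ)..(T - t), Real.sqrt (1 + ‖ξ - ξs - τ • η‖ ^ 2) ^ (2 * s)) = J at *
  have hj0 : 0 ≤ Real.sqrt (1 + ‖ξ - ξs‖ ^ 2) := Real.sqrt_nonneg _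
  generalize Real.sqrt (1 + ‖ξ - ξs‖ ^ 2) = c at *
  generalize Real.sqrt (1 + ‖ξ‖ ^ 2) = a at *
  generalize Real.sqrt (1 + ‖ξs‖ ^ 2) = b at *
  generalize T - t = L at *
  have hH : 0 ≤ L * ‖η‖ := by positivity
  generalize L * ‖η‖ = H at *
  have ha : 0 < a := by linarith
  have hb : 0 < b := by linarith
  obtain ⟨R, rfl⟩ : ∃ R, b = R * a := ⟨b / a, by field_simp⟩
  have hR : 1 ≤ 2 * R := by
    by_contra hcon
    push Not at hcon
    nlinarith
  have hK : 1 ≤ (21 * R) ^ (2 * s) := Real.one_le_rpow (by linarith) (by linarith)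
  have hJI : J ≤ 2 * (21 * R) ^ (2 * s) * I := by
    have e1 : (c + H) ^ (2 * s) ≤ (21 * R * ((a + H) / 7)) ^ (2 * s) := by
      apply Real.rpow_le_rpow (by linarith) _ (by linarith)
      nlinarith
    rw [Real.mul_rpow (by linarith) (by positivity)] at e1
    have e2 := mul_le_mul_of_nonneg_left e1 hL
    have e3 := mul_le_mul_of_nonneg_left hlo
      (show 0 ≤ 2 * (21 * R) ^ (2 * s) by linarith)
    nlinarith
  have hA : 1 + δ * J ≤ 2 * (21 * R) ^ (2 * s) * (1 + δ * I) := by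
    have := mul_le_mul_of_nonneg_left hJI hδ.le
    nlinarith
  have hA0 : 0 < 1 + δ * I := by positivity
  have hB0 : 0 < 1 + δ * J := by positivity
  have hp : (1 + δ * J) ^ (1 / 2 + ε) ≤ 2 ^ (1 / 2 + ε) * (21 * R) * (1 + δ * I) ^ (1 / 2 + ε) := by
    have := Real.rpow_le_rpow hB0.le hA (show 0 ≤ 1 / 2 + ε by linarith)
    rw [Real.mul_rpow (by positivity) hA0.le, Real.mul_rpow (by norm_num) (by positivity),
      ← Real.rpow_mul (by linarith)] at this
    have e : (21 * R) ^ (2 * s * (1 / 2 + ε)) ≤ 21 * R := by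
      have := Real.rpow_le_rpow_of_exponent_le (show 1 ≤ 21 * R by linarith)
        (show 2 * s * (1 / 2 + ε) ≤ 1 by nlinarith)
      simpa using this
    refine this.trans ?_
    gcongr
  rw [show -(1 / 2 : ℝ) - ε = -(1 / 2 + ε) by ring, Real.rpow_neg hA0.le, Real.rpow_neg hB0.le,
    ← div_eq_mul_inv, ← div_eq_mul_inv, div_le_div_iff₀ (by positivity) (by positivity)]
  have := mul_le_mul_of_nonneg_left hp ha.le
  linarith
end

section
/- Let 0 < s < 1, ε > 0 and κ ∈ [0, 1]. There exists a constant C > 0, depending only on s and ε, such that for all δ > 0, T > 0, η ∈ ℝ³, t ∈ [0, T], and all ξ, ξ★ ∈ ℝ³ with ⟨ξ★⟩ ≤ |ξ|/2: |M(t, ξ) − M(t, ξ − ξ★)| ≤ C (⟨ξ★⟩/⟨ξ⟩)^κ M(t, ξ − ξ★). -/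
open MeasureTheory

lemma aux_pow (C p : ℝ) (hC : 0 < C) (hp : 0 < p) :
    ∃ D : ℝ, 0 < D ∧ ∀ z : ℝ, 0 < z → z ≤ 1 + C → |z ^ p - 1| ≤ D * |z - 1| := by
  obtain ⟨n, hn⟩ := exists_nat_ge p
  have hn0 : (0 : ℝ) < n := lt_of_lt_of_le hp hn
  refine ⟨n * (1 + C) ^ n, by positivity, fun z hz hzC => ?_⟩
  have hC1 : (1 : ℝ) ≤ (1 + C) ^ n := one_le_pow₀ (by linarith)
  rcases le_total z 1 with h | h
  · have h1 : z ^ p ≤ 1 := Real.rpow_le_one hz.le h hp.le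
    have h2 : z ^ (n : ℝ) ≤ z ^ p := Real.rpow_le_rpow_of_exponent_ge hz h hn
    rw [Real.rpow_natCast] at h2
    have h3 := one_add_mul_le_pow (a := z - 1) (by linarith) n
    rw [show 1 + (z - 1) = z by ring] at h3
    rw [abs_of_nonpos (by linarith), abs_of_nonpos (by linarith)]
    have : (n : ℝ) * (1 - z) ≤ n * (1 + C) ^ n * (1 - z) := by
      apply mul_le_mul_of_nonneg_right _ (by linarith)
      nlinarith
    linarith
  · have h1 : 1 ≤ z ^ p := Real.one_le_rpow h hp.le
    have h2 : z ^ p ≤ z ^ (n : ℝ) := Real.rpow_le_rpow_of_exponent_le h hn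
    rw [Real.rpow_natCast] at h2
    have hzi : z⁻¹ ≤ 1 := inv_le_one_of_one_le₀ h
    have hzi0 : 0 < z⁻¹ := inv_pos.2 hz
    have h3 := one_add_mul_le_pow (a := z⁻¹ - 1) (by linarith) n
    rw [show 1 + (z⁻¹ - 1) = z⁻¹ by ring, inv_pow] at h3
    have hzn : 0 < z ^ n := by positivity
    have h4 : z ^ n * (1 + n * (z⁻¹ - 1)) ≤ 1 := by
      calc _ ≤ z ^ n * (z ^ n)⁻¹ := mul_le_mul_of_nonneg_left h3 hzn.le
        _ = 1 := mul_inv_cancel₀ hzn.ne'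
    have h5 : 1 - z⁻¹ ≤ z - 1 := by
      have : z * z⁻¹ = 1 := mul_inv_cancel₀ hz.ne'
      nlinarith
    have h6 : z ^ n ≤ (1 + C) ^ n := pow_le_pow_left₀ hz.le hzC n
    rw [abs_of_nonneg (by linarith), abs_of_nonneg (by linarith)]
    have h7 : n * (z ^ n * (1 - z⁻¹)) ≤ n * ((1 + C) ^ n * (z - 1)) := by
      apply mul_le_mul_of_nonneg_left _ hn0.le
      apply mul_le_mul h6 h5 (by linarith) (by positivity)
    nlinarith

/-- pointwise difference -/
lemma aux_diff (a x y : ℝ) (ha : 0 < a) (ha2 : a < 2) (hx : 0 < x) (hy : 0 < y) :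
    |x ^ a - y ^ a| ≤ 2 * |x - y| * (max x y) ^ (a - 1) := by
  wlog h : y ≤ x generalizing x y
  · have := this y x hy hx (le_of_not_ge h)
    rwa [abs_sub_comm, abs_sub_comm x, max_comm]
  have h1 : y ^ a ≤ x ^ a := Real.rpow_le_rpow hy.le h ha.le
  rw [max_eq_left h, abs_of_nonneg (by linarith), abs_of_nonneg (by linarith)]
  have hu : 0 < y / x := by positivity
  have hu1 : y / x ≤ 1 := by rw [div_le_one hx]; exact h
  have h2 : (y / x) ^ (2 : ℝ) ≤ (y / x) ^ a := Real.rpow_le_rpow_of_exponent_ge hu hu1 ha2.le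
  rw [Real.rpow_two, Real.div_rpow hy.le hx.le] at h2
  have hxa : 0 < x ^ a := by positivity
  rw [le_div_iff₀ hxa] at h2
  rw [Real.rpow_sub_one hx.ne']
  have h3 : 2 * (x - y) * (x ^ a / x) = 2 * (1 - y / x) * x ^ a := by field_simp
  rw [h3]
  nlinarith [mul_nonneg (sq_nonneg (1 - y / x)) hxa.le]

lemma br_ge_one (v : E3) : 1 ≤ Real.sqrt (1 + ‖v‖ ^ 2) := by
  apply Real.le_sqrt_of_sq_le; nlinarith [sq_nonneg ‖v‖]

lemma br_ge (v : E3) : ‖v‖ ≤ Real.sqrt (1 + ‖v‖ ^ 2) := by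
  apply Real.le_sqrt_of_sq_le; linarith

lemma br_le (v : E3) : Real.sqrt (1 + ‖v‖ ^ 2) ≤ 1 + ‖v‖ := by
  rw [Real.sqrt_le_left (by positivity)]; nlinarith [norm_nonneg v]

lemma br_lip (v w : E3) :
    |Real.sqrt (1 + ‖v‖ ^ 2) - Real.sqrt (1 + ‖w‖ ^ 2)| ≤ ‖v - w‖ := by
  have h1 := br_ge v
  have h2 := br_ge w
  have h3 := br_ge_one v
  have h4 := br_ge_one w
  have e1 : Real.sqrt (1 + ‖v‖ ^ 2) ^ 2 = 1 + ‖v‖ ^ 2 := Real.sq_sqrt (by positivity)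
  have e2 : Real.sqrt (1 + ‖w‖ ^ 2) ^ 2 = 1 + ‖w‖ ^ 2 := Real.sq_sqrt (by positivity)
  set p := Real.sqrt (1 + ‖v‖ ^ 2)
  set q := Real.sqrt (1 + ‖w‖ ^ 2)
  refine le_trans ?_ (abs_norm_sub_norm_le v w)
  have e : (p - q) * (p + q) = (‖v‖ - ‖w‖) * (‖v‖ + ‖w‖) := by nlinarith
  have e' : |p - q| * (p + q) = |‖v‖ - ‖w‖| * (‖v‖ + ‖w‖) := by
    have := congrArg abs e
    rwa [abs_mul, abs_mul, abs_of_nonneg (show 0 ≤ p + q by linarith),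
      abs_of_nonneg (show 0 ≤ ‖v‖ + ‖w‖ by positivity)] at this
  have : |‖v‖ - ‖w‖| * (‖v‖ + ‖w‖) ≤ |‖v‖ - ‖w‖| * (p + q) :=
    mul_le_mul_of_nonneg_left (by linarith) (abs_nonneg _)
  exact le_of_mul_le_mul_right (e'.le.trans this) (by linarith)

lemma cont_br (η v : E3) (a : ℝ) :
    Continuous fun τ : ℝ => Real.sqrt (1 + ‖v - τ • η‖ ^ 2) ^ a := by
  apply Continuous.rpow_const
  · fun_prop
  · intro τ; left; have := br_ge_one (v - τ • η); positivity

lemma br_line (η v : E3) (τ : ℝ) (hτ : 0 ≤ τ) :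
    |‖v‖ - τ * ‖η‖| ≤ Real.sqrt (1 + ‖v - τ • η‖ ^ 2) := by
  refine le_trans ?_ (br_ge _)
  have := abs_norm_sub_norm_le v (τ • η)
  rwa [norm_smul, Real.norm_of_nonneg hτ] at this

lemma lower (η v : E3) (a L N : ℝ) (ha : 0 < a) (ha2 : a < 2) (hL : 0 ≤ L) (hN : 0 ≤ N)
    (hNv : N ≤ 2 * max ‖v‖ (L * ‖η‖)) :
    L * N ^ a / 256 ≤ ∫ τ in (0 : ℝ)..L, Real.sqrt (1 + ‖v - τ • η‖ ^ 2) ^ a := by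
  have key : ∃ c : ℝ, 0 ≤ c ∧ c + L / 4 ≤ L ∧ ∀ τ ∈ Set.Icc c (c + L / 4),
      N / 8 ≤ Real.sqrt (1 + ‖v - τ • η‖ ^ 2) := by
    have hh := norm_nonneg η
    have hv := norm_nonneg v
    have hLh : 0 ≤ L * ‖η‖ := by positivity
    rcases le_total (L * ‖η‖ / 2) ‖v‖ with h | h
    · refine ⟨0, le_rfl, by linarith, fun τ hτ => ?_⟩
      have h1 := br_line η v τ hτ.1
      have h2 : τ * ‖η‖ ≤ (L / 4) * ‖η‖ := mul_le_mul_of_nonneg_right (by linarith [hτ.2]) hh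
      have h3 := le_abs_self (‖v‖ - τ * ‖η‖)
      rcases max_cases ‖v‖ (L * ‖η‖) with ⟨e, _⟩ | ⟨e, _⟩ <;> rw [e] at hNv <;> linarith
    · refine ⟨3 * L / 4, by linarith, by linarith, fun τ hτ => ?_⟩
      have h1 := br_line η v τ (by linarith [hτ.1])
      have h2 : (3 * L / 4) * ‖η‖ ≤ τ * ‖η‖ := mul_le_mul_of_nonneg_right (by linarith [hτ.1]) hh
      have h3 := neg_le_abs (‖v‖ - τ * ‖η‖)
      rcases max_cases ‖v‖ (L * ‖η‖) with ⟨e, _⟩ | ⟨e, _⟩ <;> rw [e] at hNv <;> linarith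
  obtain ⟨c, hc0, hcL, hc⟩ := key
  have h8 : N ^ a / 64 ≤ (N / 8) ^ a := by
    rw [Real.div_rpow hN (by norm_num)]
    apply div_le_div_of_nonneg_left (by positivity) (by positivity)
    calc (8 : ℝ) ^ a ≤ 8 ^ (2 : ℝ) := Real.rpow_le_rpow_of_exponent_le (by norm_num) ha2.le
      _ = 64 := by norm_num
  calc L * N ^ a / 256 = ∫ τ in c..(c + L / 4), N ^ a / 64 := by
        rw [intervalIntegral.integral_const, smul_eq_mul]; ring
    _ ≤ ∫ τ in c..(c + L / 4), Real.sqrt (1 + ‖v - τ • η‖ ^ 2) ^ a := by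
        apply intervalIntegral.integral_mono_on (by linarith) (by simp)
          ((cont_br η v a).intervalIntegrable _ _)
        intro τ hτ
        exact h8.trans (Real.rpow_le_rpow (by positivity) (hc τ hτ) ha.le)
    _ ≤ _ := by
        apply intervalIntegral.integral_mono_interval hc0 (by linarith) hcL
        · exact Filter.Eventually.of_forall fun τ => by simp only [Pi.zero_apply]; positivity
        · exact (cont_br η v a).intervalIntegrable _ _

lemma int_phi (a R : ℝ) (ha : 0 < a) (hR : 1 ≤ R) :
    ∫ u in (-R)..R, (1 + |u|) ^ (a - 1) ≤ 2 * ((2 * R) ^ a / a) := by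
  have hc : Continuous fun u : ℝ => (1 + |u|) ^ (a - 1) := by
    apply Continuous.rpow_const (by fun_prop)
    intro u; left; positivity
  have e1 : ∫ u in (0 : ℝ)..R, (1 + |u|) ^ (a - 1) ≤ (2 * R) ^ a / a := by
    have : ∫ u in (0 : ℝ)..R, (1 + |u|) ^ (a - 1) = ∫ u in (0 : ℝ)..R, (1 + u) ^ (a - 1) := by
      apply intervalIntegral.integral_congr
      intro u hu
      rw [Set.uIcc_of_le (by linarith)] at hu
      simp only [abs_of_nonneg hu.1]
    rw [this, intervalIntegral.integral_comp_add_left (fun u => u ^ (a - 1)),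
      integral_rpow (Or.inl (by linarith))]
    rw [sub_add_cancel]
    apply div_le_div_of_nonneg_right _ ha.le
    have : (1 + R) ^ a ≤ (2 * R) ^ a := Real.rpow_le_rpow (by linarith) (by linarith) ha.le
    have : (0 : ℝ) ≤ (1 + 0) ^ a := by positivity
    linarith
  have e2 : ∫ u in (-R)..0, (1 + |u|) ^ (a - 1) = ∫ u in (0 : ℝ)..R, (1 + |u|) ^ (a - 1) := by
    have := intervalIntegral.integral_comp_neg (a := 0) (b := R) (fun u : ℝ => (1 + |u|) ^ (a - 1))
    simpa using this.symm
  rw [← intervalIntegral.integral_add_adjacent_intervals (b := 0) (hc.intervalIntegrable _ _)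
    (hc.intervalIntegrable _ _), e2]
  linarith

lemma upper_neg (η v : E3) (a L N : ℝ) (ha : 0 < a) (ha1 : a < 1) (hL : 0 ≤ L) (hv : 2 ≤ ‖v‖)
    (hN : N = max ‖v‖ (L * ‖η‖)) :
    ∫ τ in (0 : ℝ)..L, Real.sqrt (1 + ‖v - τ • η‖ ^ 2) ^ (a - 1)
      ≤ (16 / a) * (L * N ^ (a - 1)) := by
  have hh := norm_nonneg η
  have hNv : ‖v‖ ≤ N := hN ▸ le_max_left _ _
  have hNL : L * ‖η‖ ≤ N := hN ▸ le_max_right _ _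
  have hN0 : 0 < N := by linarith
  have half : ∀ x : ℝ, 0 < x → (x / 2) ^ (a - 1) ≤ 2 * x ^ (a - 1) := by
    intro x hx
    rw [Real.div_rpow hx.le (by norm_num), div_eq_mul_inv, ← Real.rpow_neg (by norm_num), mul_comm]
    apply mul_le_mul_of_nonneg_right _ (by positivity)
    calc (2 : ℝ) ^ (-(a - 1)) ≤ 2 ^ (1 : ℝ) :=
          Real.rpow_le_rpow_of_exponent_le (by norm_num) (by linarith)
      _ = 2 := by norm_num
  have ha16 : 2 ≤ 16 / a := by rw [le_div_iff₀ ha]; linarith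
  rcases le_or_gt (L * ‖η‖) (‖v‖ / 2) with h | h
  · have hNe : N = ‖v‖ := by rw [hN]; apply max_eq_left; linarith
    calc _ ≤ ∫ τ in (0 : ℝ)..L, 2 * N ^ (a - 1) := by
          apply intervalIntegral.integral_mono_on hL ((cont_br η v _).intervalIntegrable _ _)
            (by simp)
          intro τ hτ
          refine le_trans ?_ (half N hN0)
          apply Real.rpow_le_rpow_of_nonpos (by positivity) _ (by linarith)
          have h1 := br_line η v τ hτ.1
          have h2 : τ * ‖η‖ ≤ L * ‖η‖ := mul_le_mul_of_nonneg_right hτ.2 hh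
          have h3 := le_abs_self (‖v‖ - τ * ‖η‖)
          linarith
      _ = 2 * (L * N ^ (a - 1)) := by
          rw [intervalIntegral.integral_const, smul_eq_mul]; ring
      _ ≤ _ := mul_le_mul_of_nonneg_right ha16 (by positivity)
  · have hLh : 0 < L * ‖η‖ := by linarith
    have hη : 0 < ‖η‖ := by
      rcases hh.eq_or_lt with e | e
      · rw [← e] at hLh; simp at hLh
      · exact e
    have hN2 : N ≤ 2 * (L * ‖η‖) := by rw [hN]; apply max_le <;> linarith
    have hc : Continuous fun u : ℝ => (1 + |u|) ^ (a - 1) := by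
      apply Continuous.rpow_const (by fun_prop)
      intro u; left; positivity
    have s1 : ∫ τ in (0 : ℝ)..L, Real.sqrt (1 + ‖v - τ • η‖ ^ 2) ^ (a - 1)
        ≤ ∫ τ in (0 : ℝ)..L, 2 * (1 + |‖v‖ - ‖η‖ * τ|) ^ (a - 1) := by
      apply intervalIntegral.integral_mono_on hL ((cont_br η v _).intervalIntegrable _ _)
      · have : Continuous fun τ : ℝ => 2 * (1 + |‖v‖ - ‖η‖ * τ|) ^ (a - 1) :=
          continuous_const.mul (hc.comp (by fun_prop : Continuous fun τ : ℝ => ‖v‖ - ‖η‖ * τ))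
        exact this.intervalIntegrable _ _
      · intro τ hτ
        refine le_trans ?_ (half _ (by positivity))
        apply Real.rpow_le_rpow_of_nonpos (by positivity) _ (by linarith)
        have h1 := br_line η v τ hτ.1
        have h2 := br_ge_one (v - τ • η)
        rw [mul_comm] at h1
        linarith
    have s2 : ∫ τ in (0 : ℝ)..L, 2 * (1 + |‖v‖ - ‖η‖ * τ|) ^ (a - 1)
        = 2 * (‖η‖⁻¹ * ∫ u in (‖v‖ - ‖η‖ * L)..‖v‖, (1 + |u|) ^ (a - 1)) := by
      rw [intervalIntegral.integral_const_mul,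
        intervalIntegral.integral_comp_sub_mul (fun u : ℝ => (1 + |u|) ^ (a - 1)) hη.ne']
      simp
    have s3 : ∫ u in (‖v‖ - ‖η‖ * L)..‖v‖, (1 + |u|) ^ (a - 1)
        ≤ ∫ u in (-N)..N, (1 + |u|) ^ (a - 1) := by
      apply intervalIntegral.integral_mono_interval (by linarith) (by nlinarith) hNv
      · exact Filter.Eventually.of_forall fun τ => by simp only [Pi.zero_apply]; positivity
      · exact hc.intervalIntegrable _ _
    have s4 := int_phi a N ha (by linarith)
    have s5 : (2 * N) ^ a ≤ 2 * N ^ a := by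
      rw [Real.mul_rpow (by norm_num) hN0.le]
      apply mul_le_mul_of_nonneg_right _ (by positivity)
      calc (2 : ℝ) ^ a ≤ 2 ^ (1 : ℝ) := Real.rpow_le_rpow_of_exponent_le (by norm_num) ha1.le
        _ = 2 := by norm_num
    have s6 : ‖η‖⁻¹ * N ≤ 2 * L := by
      rw [inv_mul_le_iff₀ hη]; linarith
    have s7 : N ^ a = N * N ^ (a - 1) := by
      rw [Real.rpow_sub_one hN0.ne']; field_simp
    calc _ ≤ 2 * (‖η‖⁻¹ * ∫ u in (‖v‖ - ‖η‖ * L)..‖v‖, (1 + |u|) ^ (a - 1)) := s1.trans s2.le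
      _ ≤ 2 * (‖η‖⁻¹ * (2 * ((2 * N ^ a) / a))) := by
          have : (2 * N) ^ a / a ≤ (2 * N ^ a) / a := div_le_div_of_nonneg_right s5 ha.le
          gcongr
          linarith
      _ = (‖η‖⁻¹ * N) * (8 / a * N ^ (a - 1)) := by rw [s7]; ring
      _ ≤ (2 * L) * (8 / a * N ^ (a - 1)) := mul_le_mul_of_nonneg_right s6 (by positivity)
      _ = _ := by ring

lemma main_diff (η ξ ξs : E3) (a L : ℝ) (ha : 0 < a) (ha2 : a < 2) (hL : 0 ≤ L)
    (h : Real.sqrt (1 + ‖ξs‖ ^ 2) ≤ ‖ξ‖ / 2) :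
    |(∫ τ in (0 : ℝ)..L, Real.sqrt (1 + ‖ξ - ξs - τ • η‖ ^ 2) ^ a)
      - ∫ τ in (0 : ℝ)..L, Real.sqrt (1 + ‖ξ - τ • η‖ ^ 2) ^ a|
    ≤ (65536 / a) * (Real.sqrt (1 + ‖ξs‖ ^ 2) / Real.sqrt (1 + ‖ξ‖ ^ 2)) *
      ∫ τ in (0 : ℝ)..L, Real.sqrt (1 + ‖ξ - τ • η‖ ^ 2) ^ a := by
  have hq1 := br_ge_one ξs
  have hq2 := br_ge ξs
  have hv : 2 ≤ ‖ξ‖ := by linarith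
  set q := Real.sqrt (1 + ‖ξs‖ ^ 2) with hq
  set N := max ‖ξ‖ (L * ‖η‖) with hN
  have hNv : ‖ξ‖ ≤ N := le_max_left _ _
  have hNL : L * ‖η‖ ≤ N := le_max_right _ _
  have hN0 : 0 < N := by linarith
  have hm : Continuous fun τ : ℝ => (max (Real.sqrt (1 + ‖ξ - ξs - τ • η‖ ^ 2))
      (Real.sqrt (1 + ‖ξ - τ • η‖ ^ 2))) ^ (a - 1) := by
    apply Continuous.rpow_const (by fun_prop)
    intro τ; left
    have := br_ge_one (ξ - τ • η)
    exact (lt_of_lt_of_le (by linarith) (le_max_right _ _)).ne'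
  have up : ∫ τ in (0 : ℝ)..L, (max (Real.sqrt (1 + ‖ξ - ξs - τ • η‖ ^ 2))
      (Real.sqrt (1 + ‖ξ - τ • η‖ ^ 2))) ^ (a - 1) ≤ (16 / a) * (L * N ^ (a - 1)) := by
    rcases lt_or_ge a 1 with h1 | h1
    · refine le_trans ?_ (upper_neg η ξ a L N ha h1 hL hv hN)
      apply intervalIntegral.integral_mono_on hL (hm.intervalIntegrable _ _)
        ((cont_br η ξ _).intervalIntegrable _ _)
      intro τ hτ
      have := br_ge_one (ξ - τ • η)
      exact Real.rpow_le_rpow_of_nonpos (by linarith) (le_max_right _ _) (by linarith)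
    · have h3 : (3 * N) ^ (a - 1) ≤ 3 * N ^ (a - 1) := by
        rw [Real.mul_rpow (by norm_num) hN0.le]
        apply mul_le_mul_of_nonneg_right _ (by positivity)
        calc (3 : ℝ) ^ (a - 1) ≤ 3 ^ (1 : ℝ) :=
              Real.rpow_le_rpow_of_exponent_le (by norm_num) (by linarith)
          _ = 3 := by norm_num
      have h16 : 3 ≤ 16 / a := by rw [le_div_iff₀ ha]; linarith
      calc _ ≤ ∫ τ in (0 : ℝ)..L, 3 * N ^ (a - 1) := by
            apply intervalIntegral.integral_mono_on hL (hm.intervalIntegrable _ _) (by simp)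
            intro τ hτ
            refine le_trans ?_ h3
            have g1 := br_le (ξ - τ • η)
            have g2 := br_le (ξ - ξs - τ • η)
            have g3 := norm_sub_le ξ (τ • η)
            have g4 := norm_sub_le (ξ - ξs) (τ • η)
            have g5 := norm_sub_le ξ ξs
            have g6 : ‖τ • η‖ ≤ L * ‖η‖ := by
              rw [norm_smul, Real.norm_of_nonneg hτ.1]
              exact mul_le_mul_of_nonneg_right hτ.2 (norm_nonneg _)
            apply Real.rpow_le_rpow (by positivity) _ (by linarith)
            apply max_le <;> linarith
        _ = 3 * (L * N ^ (a - 1)) := by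
            rw [intervalIntegral.integral_const, smul_eq_mul]; ring
        _ ≤ _ := mul_le_mul_of_nonneg_right h16 (by positivity)
  have lo := lower η ξ a L N ha ha2 hL hN0.le (by linarith)
  set A := ∫ τ in (0 : ℝ)..L, Real.sqrt (1 + ‖ξ - τ • η‖ ^ 2) ^ a with hA
  have d1 : |(∫ τ in (0 : ℝ)..L, Real.sqrt (1 + ‖ξ - ξs - τ • η‖ ^ 2) ^ a) - A|
      ≤ ∫ τ in (0 : ℝ)..L, 2 * q * (max (Real.sqrt (1 + ‖ξ - ξs - τ • η‖ ^ 2))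
      (Real.sqrt (1 + ‖ξ - τ • η‖ ^ 2))) ^ (a - 1) := by
    rw [hA, ← intervalIntegral.integral_sub ((cont_br η _ _).intervalIntegrable _ _)
      ((cont_br η _ _).intervalIntegrable _ _)]
    refine (intervalIntegral.abs_integral_le_integral_abs hL).trans ?_
    apply intervalIntegral.integral_mono_on hL
    · exact (((cont_br η _ _).sub (cont_br η _ _)).abs).intervalIntegrable _ _
    · exact (continuous_const.mul hm).intervalIntegrable _ _
    intro τ hτ
    have g1 := br_ge_one (ξ - τ • η)
    have g2 := br_ge_one (ξ - ξs - τ • η)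
    refine (aux_diff a _ _ ha ha2 (by linarith) (by linarith)).trans ?_
    have g3 := br_lip (ξ - ξs - τ • η) (ξ - τ • η)
    rw [show ξ - ξs - τ • η - (ξ - τ • η) = -ξs by abel, norm_neg] at g3
    apply mul_le_mul_of_nonneg_right (by linarith)
    positivity
  rw [intervalIntegral.integral_const_mul] at d1
  have hb0 := br_ge_one ξ
  have hb : Real.sqrt (1 + ‖ξ‖ ^ 2) ≤ 2 * N := by linarith [br_le ξ]
  set b := Real.sqrt (1 + ‖ξ‖ ^ 2)
  have hq0 : 0 < q := by linarith
  have hb00 : 0 < b := by linarith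
  have s7 : N ^ (a - 1) ≤ 2 * N ^ a / b := by
    rw [Real.rpow_sub_one hN0.ne', div_le_div_iff₀ hN0 hb00]
    have : 0 ≤ N ^ a := by positivity
    nlinarith
  calc _ ≤ 2 * q * ((16 / a) * (L * (2 * N ^ a / b))) := by
        refine d1.trans ?_
        gcongr
        refine up.trans ?_
        gcongr
    _ = (16384 / a) * (q / b) * (L * N ^ a / 256) := by ring
    _ ≤ (65536 / a) * (q / b) * (L * N ^ a / 256) := by gcongr; norm_num
    _ ≤ _ := by gcongr

theorem stmt19 (s ε : ℝ) (hs : s ∈ Set.Ioo (0 : ℝ) 1) (hε : 0 < ε) :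
    ∃ C : ℝ, 0 < C ∧ ∀ κ ∈ Set.Icc (0 : ℝ) 1, ∀ δ T : ℝ, 0 < δ → 0 < T →
      ∀ η : EuclideanSpace ℝ (Fin 3), ∀ t ∈ Set.Icc (0 : ℝ) T,
        ∀ ξ ξs : EuclideanSpace ℝ (Fin 3),
          Real.sqrt (1 + ‖ξs‖ ^ 2) ≤ ‖ξ‖ / 2 →
          |symbM s ε δ T η t ξ - symbM s ε δ T η t (ξ - ξs)|
            ≤ C * (Real.sqrt (1 + ‖ξs‖ ^ 2) / Real.sqrt (1 + ‖ξ‖ ^ 2)) ^ κ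
                * symbM s ε δ T η t (ξ - ξs) := by
  obtain ⟨hs0, hs1⟩ := hs
  have hK : 0 < 65536 / (2 * s) := by positivity
  obtain ⟨D, hD, hpow⟩ := aux_pow (65536 / (2 * s)) (1 / 2 + ε) hK (by positivity)
  refine ⟨D * (65536 / (2 * s)), by positivity, ?_⟩
  intro κ hκ δ T hδ hT η t ht ξ ξs h
  have hL : 0 ≤ T - t := by linarith [ht.2]
  have md := main_diff η ξ ξs (2 * s) (T - t) (by linarith) (by linarith) hL h
  have hr0 : 0 < Real.sqrt (1 + ‖ξs‖ ^ 2) / Real.sqrt (1 + ‖ξ‖ ^ 2) := by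
    have := br_ge_one ξs
    have := br_ge_one ξ
    positivity
  have hr1 : Real.sqrt (1 + ‖ξs‖ ^ 2) / Real.sqrt (1 + ‖ξ‖ ^ 2) ≤ 1 := by
    have := br_ge_one ξ
    have := br_ge ξ
    rw [div_le_one (by linarith)]
    linarith [norm_nonneg ξ]
  have hrκ : Real.sqrt (1 + ‖ξs‖ ^ 2) / Real.sqrt (1 + ‖ξ‖ ^ 2)
      ≤ (Real.sqrt (1 + ‖ξs‖ ^ 2) / Real.sqrt (1 + ‖ξ‖ ^ 2)) ^ κ := by
    have := Real.rpow_le_rpow_of_exponent_ge hr0 hr1 hκ.2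
    rwa [Real.rpow_one] at this
  have hA0 : 0 ≤ ∫ τ in (0 : ℝ)..(T - t), Real.sqrt (1 + ‖ξ - τ • η‖ ^ 2) ^ (2 * s) :=
    intervalIntegral.integral_nonneg hL fun τ _ => by positivity
  have hB0 : 0 ≤ ∫ τ in (0 : ℝ)..(T - t), Real.sqrt (1 + ‖ξ - ξs - τ • η‖ ^ 2) ^ (2 * s) :=
    intervalIntegral.integral_nonneg hL fun τ _ => by positivity
  unfold symbM
  set A := ∫ τ in (0 : ℝ)..(T - t), Real.sqrt (1 + ‖ξ - τ • η‖ ^ 2) ^ (2 * s)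
  set B := ∫ τ in (0 : ℝ)..(T - t), Real.sqrt (1 + ‖ξ - ξs - τ • η‖ ^ 2) ^ (2 * s)
  set r := Real.sqrt (1 + ‖ξs‖ ^ 2) / Real.sqrt (1 + ‖ξ‖ ^ 2)
  set K := 65536 / (2 * s)
  have hX : 0 < 1 + δ * A := by positivity
  have hY : 0 < 1 + δ * B := by positivity
  have hz : |(1 + δ * B) / (1 + δ * A) - 1| ≤ K * r := by
    rw [div_sub_one hX.ne', abs_div, abs_of_pos hX, div_le_iff₀ hX,
      show 1 + δ * B - (1 + δ * A) = δ * (B - A) by ring, abs_mul, abs_of_pos hδ]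
    have : 0 < K * r := by positivity
    nlinarith [mul_le_mul_of_nonneg_left md hδ.le]
  have hz2 : (1 + δ * B) / (1 + δ * A) ≤ 1 + K := by
    have := le_abs_self ((1 + δ * B) / (1 + δ * A) - 1)
    nlinarith
  have hp := hpow _ (by positivity) hz2
  rw [show -(1 / 2 : ℝ) - ε = -(1 / 2 + ε) by ring, Real.rpow_neg hX.le, Real.rpow_neg hY.le]
  rw [Real.div_rpow hY.le hX.le] at hp
  have hXp : 0 < (1 + δ * A) ^ (1 / 2 + ε) := by positivity
  have hYp : 0 < (1 + δ * B) ^ (1 / 2 + ε) := by positivity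
  set P := (1 + δ * A) ^ (1 / 2 + ε)
  set Q := (1 + δ * B) ^ (1 / 2 + ε)
  have e : P⁻¹ - Q⁻¹ = (Q / P - 1) * Q⁻¹ := by field_simp
  rw [e, abs_mul, abs_of_pos (inv_pos.2 hYp)]
  apply mul_le_mul_of_nonneg_right _ (inv_pos.2 hYp).le
  calc _ ≤ D * (K * r) := hp.trans (mul_le_mul_of_nonneg_left hz hD.le)
    _ = D * K * r := by ring
    _ ≤ _ := mul_le_mul_of_nonneg_left hrκ (by positivity)
end
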